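/- For every N ≥ 1, β ≥ 0 and h ∈ ℝ, the quenched free energy of the SK model is bounded by the Parisi solution: N⁻¹ E log Z_N(β,h,J) ≤ ᾱ(β,h), where ᾱ(β,h) is the infimum of the trial function ᾱ(β,h;x) over all piecewise constant functional order parameters x. -/

import Mathlib

open MeasureTheory ProbabilityTheory Filter

noncomputable section

/-! ## Gaussian disorder -/

/-- The standard (centered, unit variance) Gaussian measure on `ℝ`. -/
def stdGauss : Measure ℝ := gaussianReal 0 1

instance : IsProbabilityMeasure stdGauss := by unfold stdGauss; infer_instance

/-- `N` i.i.d. standard Gaussian variables. -/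
def gaussN (N : ℕ) : Measure (Fin N → ℝ) := Measure.pi fun _ => stdGauss

instance (N : ℕ) : IsProbabilityMeasure (gaussN N) := by unfold gaussN; infer_instance

/-- The i.i.d. standard Gaussian couplings `J_{ij}` (only entries with `i < j` are used). -/
def gaussC (N : ℕ) : Measure (Fin N → Fin N → ℝ) := Measure.pi fun _ => gaussN N

instance (N : ℕ) : IsProbabilityMeasure (gaussC N) := by unfold gaussC; infer_instance

/-- The i.i.d. standard Gaussian one-body fields `J_i^a`, `a = 1, …, K`
(row `⟨a-1⟩ : Fin K` corresponds to the level `a` of the paper). -/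
def gaussS (K N : ℕ) : Measure (Fin K → Fin N → ℝ) := Measure.pi fun _ => gaussN N

instance (K N : ℕ) : IsProbabilityMeasure (gaussS K N) := by unfold gaussS; infer_instance

/-- I.i.d. standard Gaussian couplings indexed by subsets of sites, for the p-spin model
(only the cardinality-`p` subsets are used). -/
def gaussP (N : ℕ) : Measure (Finset (Fin N) → ℝ) := Measure.pi fun _ => stdGauss

instance (N : ℕ) : IsProbabilityMeasure (gaussP N) := by unfold gaussP; infer_instance

/-! ## Spins and overlaps -/

/-- The spin value (`±1`) of a Boolean configuration entry. -/
def spin (b : Bool) : ℝ := if b then 1 else -1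

/-- The overlap `q₁₂ = N⁻¹ ∑ᵢ σᵢ⁽¹⁾ σᵢ⁽²⁾` of two replicas. -/
def overlap (N : ℕ) (σ τ : Fin N → Bool) : ℝ := (N : ℝ)⁻¹ * ∑ i, spin (σ i) * spin (τ i)

/-! ## Piecewise constant functional order parameters and the Parisi function -/

/-- One backward step of the Parisi recursion on an interval of constancy of the
functional order parameter: from `g = f(q_a, ·)`, with value `m` of the order parameter
and `s = q_a - q`, produce `f(q, ·)`. -/
def pStep (m s : ℝ) (g : ℝ → ℝ) (y : ℝ) : ℝ :=
  if m = 0 then ∫ z, g (y + z * Real.sqrt s) ∂stdGauss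
  else m⁻¹ * Real.log (∫ z, Real.exp (m * g (y + z * Real.sqrt s)) ∂stdGauss)

/-- `parisiLevel K q m β j` is the Parisi function `f(q_{K-j}, ·; x, β)` at the node
`q_{K-j}`, obtained by `j` backward steps from the final condition `f(q_K, y) = log cosh (β y)`. -/
def parisiLevel (K : ℕ) (q m : ℕ → ℝ) (β : ℝ) : ℕ → ℝ → ℝ
  | 0 => fun y => Real.log (Real.cosh (β * y))
  | j + 1 => pStep (m (K - j)) (q (K - j) - q (K - j - 1)) (parisiLevel K q m β j)

/-- The Parisi function `f(r, y; x, β)` for a piecewise constant order parameter `x`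
given by nodes `q` and values `m`:  for `q_{a-1} ≤ r ≤ q_a` it is obtained from
`f(q_a, ·)` by one backward step with value `m_a` over a time `q_a - r`. -/
def parisiF (K : ℕ) (q m : ℕ → ℝ) (β : ℝ) (r y : ℝ) : ℝ :=
  pStep (m (sInf {a : ℕ | r ≤ q a})) (q (sInf {a : ℕ | r ≤ q a}) - r)
    (parisiLevel K q m β (K - sInf {a : ℕ | r ≤ q a})) y

/-- The functional order parameter as a function: `x(r) = m_a` for `q_{a-1} ≤ r < q_a`,
and `x(1) = m_K`. -/
def xFun (K : ℕ) (q m : ℕ → ℝ) (r : ℝ) : ℝ :=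
  if 1 ≤ r then m K else m (sInf {a : ℕ | r < q a})

/-- A piecewise constant functional order parameter:
`0 = q_0 ≤ q_1 ≤ … ≤ q_K = 1`, `0 ≤ m_1 ≤ … ≤ m_K ≤ 1`,
with the conventions `m_0 = 0`, `m_{K+1} = 1`. -/
structure OrderParam where
  K : ℕ
  hK : 1 ≤ K
  q : ℕ → ℝ
  m : ℕ → ℝ
  hq0 : q 0 = 0
  hqK : q K = 1
  hq_mono : ∀ a, a < K → q a ≤ q (a + 1)
  hm0 : m 0 = 0
  hmtop : m (K + 1) = 1
  hm1 : 0 ≤ m 1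
  hm_mono : ∀ a, 1 ≤ a → a < K → m a ≤ m (a + 1)
  hmK : m K ≤ 1

/-- Guerra's trial function `ᾱ(β, h; x) = log 2 + f(0, h; x, β) - (β²/2) ∫₀¹ r x(r) dr`. -/
def trialAlpha (K : ℕ) (q m : ℕ → ℝ) (β h : ℝ) : ℝ :=
  Real.log 2 + parisiLevel K q m β K h - β ^ 2 / 2 * ∫ r in (0 : ℝ)..1, r * xFun K q m r

/-! ## The Sherrington–Kirkpatrick model -/

/-- The SK Hamiltonian `H_N(σ, h, J) = -(1/√N) ∑_{i<j} J_{ij} σ_i σ_j - h ∑_i σ_i`. -/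
def hamSK (N : ℕ) (h : ℝ) (Jc : Fin N → Fin N → ℝ) (σ : Fin N → Bool) : ℝ :=
  -(1 / Real.sqrt N) * ∑ i, ∑ j, (if i < j then Jc i j * spin (σ i) * spin (σ j) else 0)
    - h * ∑ i, spin (σ i)

/-- The SK partition function `Z_N(β, h, J)`. -/
def ZSK (N : ℕ) (β h : ℝ) (Jc : Fin N → Fin N → ℝ) : ℝ :=
  ∑ σ : Fin N → Bool, Real.exp (-(β * hamSK N h Jc σ))

/-- The quenched average `N⁻¹ E log Z_N(β, h, J)`. -/
def quenchedFE (N : ℕ) (β h : ℝ) : ℝ :=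
  (N : ℝ)⁻¹ * ∫ Jc, Real.log (ZSK N β h Jc) ∂gaussC N

/-- The ground state energy density `e_N(J, h)`, defined by
`-e_N(J, h) = N⁻¹ min_σ H_N(σ, h, J)`. -/
def eGS (N : ℕ) (h : ℝ) (Jc : Fin N → Fin N → ℝ) : ℝ :=
  -((N : ℝ)⁻¹ * ⨅ σ : Fin N → Bool, hamSK N h Jc σ)

/-- The quenched ground state energy density `e_N(h) = E(e_N(J, h))`. -/
def eQuenched (N : ℕ) (h : ℝ) : ℝ := ∫ Jc, eGS N h Jc ∂gaussC N

/-! ## The interpolating system -/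

/-- The interpolating Boltzmann factor. -/
def bFac (N K : ℕ) (β h t : ℝ) (q : ℕ → ℝ) (Jc : Fin N → Fin N → ℝ)
    (Js : Fin K → Fin N → ℝ) (σ : Fin N → Bool) : ℝ :=
  Real.exp (β * Real.sqrt (t / N) *
        ∑ i, ∑ j, (if i < j then Jc i j * spin (σ i) * spin (σ j) else 0)
      + β * h * ∑ i, spin (σ i)
      + β * Real.sqrt (1 - t) *
          ∑ a : Fin K, Real.sqrt (q (a.val + 1) - q a.val) * ∑ i, Js a i * spin (σ i))

/-- The interpolating partition function `Z̃_N(β, h; t; x; J)`. -/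
def Ztil (N K : ℕ) (β h t : ℝ) (q : ℕ → ℝ) (Jc : Fin N → Fin N → ℝ)
    (Js : Fin K → Fin N → ℝ) : ℝ :=
  ∑ σ : Fin N → Bool, bFac N K β h t q Jc Js σ

/-- `Wrec … j` is the random variable `Z_{K-j}`:  `Z_K = Z̃_N` and
`Z_{a-1} = (E_a (Z_a^{m_a}))^{1/m_a}`, where `E_a` integrates the Gaussian row `J^a`. -/
def Wrec (N K : ℕ) (β h t : ℝ) (q m : ℕ → ℝ) :
    ℕ → (Fin N → Fin N → ℝ) → (Fin K → Fin N → ℝ) → ℝ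
  | 0 => Ztil N K β h t q
  | j + 1 => fun Jc Js =>
      if hj : j < K then
        (∫ g : Fin N → ℝ,
            (Wrec N K β h t q m j Jc (Function.update Js ⟨K - 1 - j, by omega⟩ g)) ^ m (K - j)
          ∂gaussN N) ^ (m (K - j))⁻¹
      else Wrec N K β h t q m j Jc Js

/-- `Zrec … a` is the random variable `Z_a` of the broken replica interpolation. -/
def Zrec (N K : ℕ) (β h t : ℝ) (q m : ℕ → ℝ) (a : ℕ) :
    (Fin N → Fin N → ℝ) → (Fin K → Fin N → ℝ) → ℝ :=
  Wrec N K β h t q m (K - a)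

/-- The interpolating auxiliary function `α̃_N(t) = N⁻¹ E₀ log Z₀`. -/
def atilde (N K : ℕ) (β h : ℝ) (q m : ℕ → ℝ) (t : ℝ) : ℝ :=
  (N : ℝ)⁻¹ * ∫ Jc, Real.log (Wrec N K β h t q m K Jc 0) ∂gaussC N

/-- The normalized weight `f_a = Z_a^{m_a} / E_a(Z_a^{m_a}) = Z_a^{m_a} / Z_{a-1}^{m_a}`. -/
def fWeight (N K : ℕ) (β h t : ℝ) (q m : ℕ → ℝ) (a : ℕ) (Jc : Fin N → Fin N → ℝ)
    (Js : Fin K → Fin N → ℝ) : ℝ :=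
  Zrec N K β h t q m a Jc Js ^ m a / Zrec N K β h t q m (a - 1) Jc Js ^ m a

/-- The Gibbs expectation `ω(A)` of the interpolating Boltzmann factor. -/
def gibbs (N K : ℕ) (β h t : ℝ) (q : ℕ → ℝ) (A : (Fin N → Bool) → ℝ)
    (Jc : Fin N → Fin N → ℝ) (Js : Fin K → Fin N → ℝ) : ℝ :=
  (∑ σ : Fin N → Bool, A σ * bFac N K β h t q Jc Js σ) / Ztil N K β h t q Jc Js

/-- The two-replica Gibbs product expectation `Ω(A)`. -/
def gibbs2 (N K : ℕ) (β h t : ℝ) (q : ℕ → ℝ) (A : (Fin N → Bool) → (Fin N → Bool) → ℝ)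
    (Jc : Fin N → Fin N → ℝ) (Js : Fin K → Fin N → ℝ) : ℝ :=
  (∑ σ : Fin N → Bool, ∑ τ : Fin N → Bool,
      A σ τ * bFac N K β h t q Jc Js σ * bFac N K β h t q Jc Js τ) /
    Ztil N K β h t q Jc Js ^ 2

/-- `omT1 … A j` is the partially averaged state `ω̃_{K-j}(A)`:
`ω̃_K = ω` and `ω̃_{a-1}(·) = E_a (f_a ω̃_a(·))`. -/
def omT1 (N K : ℕ) (β h t : ℝ) (q m : ℕ → ℝ) (A : (Fin N → Bool) → ℝ) :
    ℕ → (Fin N → Fin N → ℝ) → (Fin K → Fin N → ℝ) → ℝ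
  | 0 => gibbs N K β h t q A
  | j + 1 => fun Jc Js =>
      if hj : j < K then
        ∫ g : Fin N → ℝ,
          fWeight N K β h t q m (K - j) Jc (Function.update Js ⟨K - 1 - j, by omega⟩ g) *
            omT1 N K β h t q m A j Jc (Function.update Js ⟨K - 1 - j, by omega⟩ g)
          ∂gaussN N
      else omT1 N K β h t q m A j Jc Js

/-- `omT2 … A j` is the partially averaged two-replica state `Ω̃_{K-j}(A)`:
`Ω̃_K = Ω` and `Ω̃_{a-1}(·) = E_a (f_a Ω̃_a(·))`. -/
def omT2 (N K : ℕ) (β h t : ℝ) (q m : ℕ → ℝ) (A : (Fin N → Bool) → (Fin N → Bool) → ℝ) :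
    ℕ → (Fin N → Fin N → ℝ) → (Fin K → Fin N → ℝ) → ℝ
  | 0 => gibbs2 N K β h t q A
  | j + 1 => fun Jc Js =>
      if hj : j < K then
        ∫ g : Fin N → ℝ,
          fWeight N K β h t q m (K - j) Jc (Function.update Js ⟨K - 1 - j, by omega⟩ g) *
            omT2 N K β h t q m A j Jc (Function.update Js ⟨K - 1 - j, by omega⟩ g)
          ∂gaussN N
      else omT2 N K β h t q m A j Jc Js

/-- The deformed quenched average `⟨A⟩_a = E(f_1 ⋯ f_a Ω̃_a(A))` at interpolation
parameter `t`, for a function `A` of two replicas. -/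
def angA (N K : ℕ) (β h t : ℝ) (q m : ℕ → ℝ) (a : ℕ)
    (A : (Fin N → Bool) → (Fin N → Bool) → ℝ) : ℝ :=
  ∫ Jc, ∫ Js,
      (∏ b ∈ Finset.Icc 1 a, fWeight N K β h t q m b Jc Js) *
        omT2 N K β h t q m A (K - a) Jc Js
    ∂gaussS K N ∂gaussC N

/-! ## Zero temperature (ground state) objects -/

/-- The zero-temperature Parisi recursion: `parisiLevelBar K q m j` is `f̄(q_{K-j}, ·; x̄)`,
with final condition `f̄(q_K, y) = |y|`. -/
def parisiLevelBar (K : ℕ) (q m : ℕ → ℝ) : ℕ → ℝ → ℝ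
  | 0 => fun y => |y|
  | j + 1 => pStep (m (K - j)) (q (K - j) - q (K - j - 1)) (parisiLevelBar K q m j)

/-- A zero-temperature piecewise constant order parameter: nodes
`0 = q_0 ≤ … ≤ q_K = 1` and nondecreasing values `0 ≤ m̄_1 ≤ … ≤ m̄_K`
(no upper bound `1`), with the convention `m̄_0 = 0`. -/
structure ZeroTParam where
  K : ℕ
  hK : 1 ≤ K
  q : ℕ → ℝ
  m : ℕ → ℝ
  hq0 : q 0 = 0
  hqK : q K = 1
  hq_mono : ∀ a, a < K → q a ≤ q (a + 1)
  hm0 : m 0 = 0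
  hm1 : 0 ≤ m 1
  hm_mono : ∀ a, 1 ≤ a → a < K → m a ≤ m (a + 1)

/-- The zero-temperature trial function `α̃(h; x̄) = f̄(0, h; x̄) - (1/2) ∫₀¹ r x̄(r) dr`. -/
def gsTrial (K : ℕ) (q m : ℕ → ℝ) (h : ℝ) : ℝ :=
  parisiLevelBar K q m K h - 1 / 2 * ∫ r in (0 : ℝ)..1, r * xFun K q m r

/-! ## The p-spin model -/

/-- A piecewise constant functional order parameter on `[0, p/2]`:
`0 = q_0 ≤ … ≤ q_K = p/2` and `0 ≤ m_1 ≤ … ≤ m_K ≤ 1`. -/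
structure POrderParam (p : ℕ) where
  K : ℕ
  hK : 1 ≤ K
  q : ℕ → ℝ
  m : ℕ → ℝ
  hq0 : q 0 = 0
  hqK : q K = p / 2
  hq_mono : ∀ a, a < K → q a ≤ q (a + 1)
  hm1 : 0 ≤ m 1
  hm_mono : ∀ a, 1 ≤ a → a < K → m a ≤ m (a + 1)
  hmK : m K ≤ 1

/-- The p-spin Hamiltonian
`H_N(σ,h,J) = -(p!/(2N^{p-1}))^{1/2} ∑_{i_1<…<i_p} J_{i_1…i_p} σ_{i_1}⋯σ_{i_p} - h ∑_i σ_i`. -/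
def hamP (p N : ℕ) (h : ℝ) (J : Finset (Fin N) → ℝ) (σ : Fin N → Bool) : ℝ :=
  -Real.sqrt ((Nat.factorial p : ℝ) / (2 * (N : ℝ) ^ (p - 1))) *
      ∑ S ∈ Finset.powersetCard p (Finset.univ : Finset (Fin N)), J S * ∏ i ∈ S, spin (σ i)
    - h * ∑ i, spin (σ i)

/-- The p-spin partition function. -/
def ZP (p N : ℕ) (β h : ℝ) (J : Finset (Fin N) → ℝ) : ℝ :=
  ∑ σ : Fin N → Bool, Real.exp (-(β * hamP p N h J σ))

/-- The p-spin quenched average `N⁻¹ E log Z_N^{(p)}(β, h, J)`. -/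
def quenchedFEP (p N : ℕ) (β h : ℝ) : ℝ :=
  (N : ℝ)⁻¹ * ∫ J, Real.log (ZP p N β h J) ∂gaussP N

/-- The functional order parameter on `[0, p/2]` as a function. -/
def xFunP (p K : ℕ) (q m : ℕ → ℝ) (r : ℝ) : ℝ :=
  if (p : ℝ) / 2 ≤ r then m K else m (sInf {a : ℕ | r < q a})

/-- The change of variables `q̄(r)` defined by `2r = p q̄^{p-1}`. -/
def qBar (p : ℕ) (r : ℝ) : ℝ := (2 * r / p) ^ (((p : ℝ) - 1)⁻¹)

/-- The p-spin trial function
`ᾱ_p(β, h; x) = log 2 + f(0, h; x, β) - (β²/2) ∫₀^{p/2} q̄(r) x(r) dr`. -/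
def trialAlphaP (p K : ℕ) (q m : ℕ → ℝ) (β h : ℝ) : ℝ :=
  Real.log 2 + parisiLevel K q m β K h
    - β ^ 2 / 2 * ∫ r in (0 : ℝ)..((p : ℝ) / 2), qBar p r * xFunP p K q m r

/-!
The Hamiltonian is a Gaussian vector indexed by the configurations, and only its covariance matters:
with `R` the overlap and `b = β² N / 2`, it is `b R²` up to a constant for the SK couplings and
`2 b (qⱼ - qⱼ₊₁) R` for the cavity fields of the `j`-th Parisi level, counted from `q₀ = 1` down to
`0`. Give the couplings the amplitude `sin t` and the cavity fields the amplitude `cos t`, and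
average the log-partition function over the `j`-th cavity field by `X ↦ mⱼ⁻¹ log E exp (mⱼ X)` and
over the couplings by `E`. At `t = π / 2` only the couplings remain; at `t = 0` the spins decouple
and each one sees the Parisi recursion.

By Gaussian integration by parts the average `u` over the first `j` cavity fields satisfies
`∂ₜ u + sin t cos t ⟨b (R - qⱼ)², D²u + mⱼ Du ⊗ Du⟩ ≤ sin t cos t Lⱼ` with constants `Lⱼ`. Each
further average adds its covariance to the pairing, up to a constant which completes the square
`b (R - qⱼ₊₁)²`; as this is nonnegative, `mⱼ` may then be lowered to `mⱼ₊₁`. At `qⱼ = 0` the square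
is the covariance of the couplings, and averaging these cancels it. What remains is
`-b` times the sum of the `mⱼ (qⱼ² - qⱼ₊₁²)`, the integral in the trial function.
-/

open Real (exp log sin cos)
open scoped Topology Real

-- Norms on iterated spaces of continuous linear maps are found only at this depth.
set_option maxSynthPendingDepth 3

/-! ## Free energies -/

section LogLaplace

variable {Ω Ω' : Type*} [MeasurableSpace Ω] [MeasurableSpace Ω'] {μ : Measure Ω} {m : ℝ}
  {f g : Ω → ℝ}

/-- The free energy `m⁻¹ log ∫ exp (m f) ∂μ` of the observable `f`, which is the elementary
operation of the Parisi recursion; at `m = 0` it is the mean of `f`. -/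
def logLaplace (m : ℝ) (μ : Measure Ω) (f : Ω → ℝ) : ℝ :=
  if m = 0 then μ[f] else m⁻¹ * cgf f μ m

lemma logLaplace_const [IsProbabilityMeasure μ] (c : ℝ) : logLaplace m μ (fun _ => c) = c := by
  by_cases hm : m = 0 <;> simp [logLaplace, hm]

lemma logLaplace_map {φ : Ω → Ω'} (hφ : Measurable φ) {f : Ω' → ℝ} (hf : Measurable f) :
    logLaplace m (μ.map φ) f = logLaplace m μ (f ∘ φ) := by
  have hexp : Measurable fun ω => exp (m * f ω) := by fun_prop
  simp only [logLaplace, cgf, mgf, integral_map hφ.aemeasurable hf.aestronglyMeasurable,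
    integral_map hφ.aemeasurable hexp.aestronglyMeasurable, Function.comp_def]

lemma logLaplace_mono [NeZero μ] (hf : Integrable f μ) (hg : Integrable g μ)
    (hf_exp : Integrable (fun ω => exp (m * f ω)) μ)
    (hg_exp : Integrable (fun ω => exp (m * g ω)) μ) (hfg : f ≤ g) :
    logLaplace m μ f ≤ logLaplace m μ g := by
  rcases lt_trichotomy m 0 with hm | rfl | hm
  · have : cgf g μ m ≤ cgf f μ m := Real.log_le_log (mgf_pos' (NeZero.ne μ) hg_exp) <|
      integral_mono hg_exp hf_exp fun ω =>
        Real.exp_le_exp.2 (mul_le_mul_of_nonpos_left (hfg ω) hm.le)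
    simpa [logLaplace, hm.ne] using mul_le_mul_of_nonpos_left this (inv_lt_zero.2 hm).le
  · simpa [logLaplace] using integral_mono hf hg hfg
  · have : cgf f μ m ≤ cgf g μ m := Real.log_le_log (mgf_pos' (NeZero.ne μ) hf_exp) <|
      integral_mono hf_exp hg_exp fun ω =>
        Real.exp_le_exp.2 (mul_le_mul_of_nonneg_left (hfg ω) hm.le)
    simpa [logLaplace, hm.ne'] using mul_le_mul_of_nonneg_left this (inv_pos.2 hm).le

lemma logLaplace_const_add [IsProbabilityMeasure μ] (hf : Integrable f μ)
    (hf_exp : Integrable (fun ω => exp (m * f ω)) μ) (c : ℝ) :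
    logLaplace m μ (fun ω => c + f ω) = c + logLaplace m μ f := by
  by_cases hm : m = 0
  · simp [logLaplace, hm, integral_add (integrable_const c) hf]
  · have : cgf (fun ω => c + f ω) μ m = m * c + cgf f μ m := by
      rw [cgf, mgf_const_add, Real.log_mul (Real.exp_ne_zero _) (mgf_pos hf_exp).ne',
        Real.log_exp, cgf]
    rw [logLaplace, logLaplace, if_neg hm, if_neg hm, this]
    field_simp

lemma logLaplace_pi_sum {ι : Type*} [Fintype ι] {X : ι → Type*} [∀ i, MeasurableSpace (X i)]
    {μ : ∀ i, Measure (X i)} [∀ i, IsProbabilityMeasure (μ i)] {f : ∀ i, X i → ℝ}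
    (hf : ∀ i, Integrable (f i) (μ i))
    (hf_exp : ∀ i, Integrable (fun x => exp (m * f i x)) (μ i)) :
    logLaplace m (Measure.pi μ) (fun ω => ∑ i, f i (ω i)) = ∑ i, logLaplace m (μ i) (f i) := by
  by_cases hm : m = 0
  · simp [logLaplace, hm, integral_finsetSum _ fun i _ => integrable_comp_eval (hf i),
      integral_comp_eval (hf _).aestronglyMeasurable]
  · have : mgf (fun ω => ∑ i, f i (ω i)) (Measure.pi μ) m = ∏ i, mgf (f i) (μ i) m := by
      simp only [mgf, Finset.mul_sum, Real.exp_sum]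
      exact integral_fintype_prod_eq_prod fun i x => exp (m * f i x)
    simp [logLaplace, hm, cgf, this, Real.log_prod fun i _ => (mgf_pos (hf_exp i)).ne',
      Finset.mul_sum]

end LogLaplace

/-! ## Exponential moments and differentiation of Gibbs averages -/

section ExpMoments

variable {Ω : Type*} [NormedAddCommGroup Ω] [MeasurableSpace Ω] {μ : Measure Ω}
  {V : Type*} [NormedAddCommGroup V]

/-- All exponential moments of the norm are finite under `μ`. -/
def HasExpMoments (μ : Measure Ω) : Prop := ∀ k : ℝ, Integrable (fun ω => exp (k * ‖ω‖)) μ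

lemma HasExpMoments.integrable_of_norm_le (hμ : HasExpMoments μ) {f : Ω → V}
    (hf : AEStronglyMeasurable f μ) (C k : ℝ) (hC : ∀ ω, ‖f ω‖ ≤ C * exp (k * ‖ω‖)) :
    Integrable f μ :=
  ((hμ k).const_mul C).mono' hf (.of_forall hC)

lemma one_add_le_exp_one_mul (r : ℝ) : 1 + r ≤ exp (1 * r) := by
  rw [one_mul, add_comm]; exact Real.add_one_le_exp r

lemma HasExpMoments.integrable_of_linear_growth (hμ : HasExpMoments μ) {f : Ω → V}
    (hf : AEStronglyMeasurable f μ) {C : ℝ} (hC : ∀ ω, ‖f ω‖ ≤ C * (1 + ‖ω‖)) :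
    Integrable f μ := by
  have hC0 : 0 ≤ C := by simpa using (norm_nonneg _).trans (hC 0)
  exact hμ.integrable_of_norm_le hf C 1 fun ω =>
    (hC ω).trans (mul_le_mul_of_nonneg_left (one_add_le_exp_one_mul _) hC0)

lemma norm_exp_smul_le [NormedSpace ℝ V] {a r C D k : ℝ} {v : V} (m : ℝ)
    (ha : |a| ≤ C * (1 + r)) (hv : ‖v‖ ≤ D * exp (k * r)) :
    ‖exp (m * a) • v‖ ≤ exp (|m| * C) * D * exp ((|m| * C + k) * r) := by
  have hexp : exp (m * a) ≤ exp (|m| * C) * exp (|m| * C * r) := by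
    rw [← Real.exp_add]
    refine Real.exp_le_exp.2 ((le_abs_self _).trans ?_)
    rw [abs_mul]
    linarith [mul_le_mul_of_nonneg_left ha (abs_nonneg m)]
  calc ‖exp (m * a) • v‖ = exp (m * a) * ‖v‖ := by rw [norm_smul, Real.norm_eq_abs, Real.abs_exp]
    _ ≤ exp (|m| * C) * exp (|m| * C * r) * (D * exp (k * r)) := by gcongr
    _ = exp (|m| * C) * D * exp ((|m| * C + k) * r) := by rw [add_mul, Real.exp_add]; ring

lemma HasExpMoments.integrable_exp_smul [NormedSpace ℝ V] (hμ : HasExpMoments μ) {f : Ω → ℝ}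
    {g : Ω → V} (hf : AEStronglyMeasurable f μ) (hg : AEStronglyMeasurable g μ) {C D k : ℝ}
    (hC : ∀ ω, |f ω| ≤ C * (1 + ‖ω‖)) (hD : ∀ ω, ‖g ω‖ ≤ D * exp (k * ‖ω‖)) (m : ℝ) :
    Integrable (fun ω => exp (m * f ω) • g ω) μ :=
  hμ.integrable_of_norm_le
    ((Real.continuous_exp.comp_aestronglyMeasurable (hf.const_mul m)).smul hg) _ _
    fun ω => norm_exp_smul_le m (hC ω) (hD ω)

lemma HasExpMoments.integrable_exp (hμ : HasExpMoments μ) {f : Ω → ℝ}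
    (hf : AEStronglyMeasurable f μ) {C : ℝ} (hC : ∀ ω, |f ω| ≤ C * (1 + ‖ω‖)) (m : ℝ) :
    Integrable (fun ω => exp (m * f ω)) μ := by
  simpa using hμ.integrable_exp_smul (g := fun _ => (1 : ℝ)) (D := 1) (k := 0) hf
    aestronglyMeasurable_const hC (by simp) m

lemma HasExpMoments.tilted (hμ : HasExpMoments μ) {f : Ω → ℝ}
    (hf : AEStronglyMeasurable f μ) {C : ℝ} (hC : ∀ ω, |f ω| ≤ C * (1 + ‖ω‖)) (m : ℝ) :
    HasExpMoments (μ.tilted fun ω => m * f ω) := fun k => by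
  rw [integrable_tilted_iff (hμ.integrable_exp hf hC m)]
  exact hμ.integrable_exp_smul (D := 1) (k := k) hf (hμ k).aestronglyMeasurable hC (by simp) m

lemma norm_add_smul_smulRight_le {W : Type*} [NormedAddCommGroup W] [NormedSpace ℝ W]
    [NormedSpace ℝ V] {A : W →L[ℝ] V} {B : W →L[ℝ] ℝ} {v : V} {C r : ℝ} (hr : 0 ≤ r) (m : ℝ)
    (hA : ‖A‖ ≤ C * (1 + r)) (hB : ‖B‖ ≤ C * (1 + r)) (hv : ‖v‖ ≤ C * (1 + r)) :
    ‖A + m • B.smulRight v‖ ≤ (C + |m| * C ^ 2) * exp (2 * r) := by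
  have hC : 0 ≤ C := by
    by_contra! hC
    nlinarith [norm_nonneg v]
  calc ‖A + m • B.smulRight v‖ ≤ ‖A‖ + |m| * (‖B‖ * ‖v‖) := by
        refine (norm_add_le _ _).trans_eq ?_
        rw [norm_smul, ContinuousLinearMap.norm_smulRight_apply, Real.norm_eq_abs]
    _ ≤ C * (1 + r) + |m| * ((C * (1 + r)) * (C * (1 + r))) := by gcongr
    _ ≤ C * (1 + r) ^ 2 + |m| * ((C * (1 + r)) * (C * (1 + r))) := by
        gcongr; exact le_self_pow₀ (by linarith) two_ne_zero
    _ = (C + |m| * C ^ 2) * (1 + r) ^ 2 := by ring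
    _ ≤ (C + |m| * C ^ 2) * exp (1 * r) ^ 2 := by
        gcongr; exact one_add_le_exp_one_mul _
    _ = (C + |m| * C ^ 2) * exp (2 * r) := by rw [← Real.exp_nat_mul]; norm_num

end ExpMoments

lemma integral_tilted_eq_inv_smul {Ω V : Type*} [MeasurableSpace Ω] [NormedAddCommGroup V]
    [NormedSpace ℝ V] (μ : Measure Ω) (f : Ω → ℝ) (g : Ω → V) :
    ∫ ω, g ω ∂μ.tilted f = (∫ ω, exp (f ω) ∂μ)⁻¹ • ∫ ω, exp (f ω) • g ω ∂μ := by
  simp only [integral_tilted, div_eq_inv_mul, mul_smul, integral_smul]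

lemma hasFDerivAt_exp_smul {W V : Type*} [NormedAddCommGroup W] [NormedSpace ℝ W]
    [NormedAddCommGroup V] [NormedSpace ℝ V] {f : W → ℝ} {g : W → V} {w : W}
    (hf : DifferentiableAt ℝ f w) (hg : DifferentiableAt ℝ g w) (m : ℝ) :
    HasFDerivAt (fun w => exp (m * f w) • g w)
      (exp (m * f w) • (fderiv ℝ g w + m • (fderiv ℝ f w).smulRight (g w))) w := by
  convert! ((hf.hasFDerivAt.const_mul m).exp).smul hg.hasFDerivAt using 1
  ext y
  simp [smul_smul]

section Tempered

variable {W Ω V : Type*} [NormedAddCommGroup W] [NormedSpace ℝ W] [NormedAddCommGroup Ω]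
  [NormedAddCommGroup V] [NormedSpace ℝ V]

/-- A differentiable family of functions on `Ω` which grow, along with their derivative in the
parameter, at most linearly at infinity, locally uniformly in the parameter. -/
structure TemperedFamily (F : W → Ω → V) : Prop where
  continuous : Continuous (Function.uncurry F)
  differentiable : ∀ ω, Differentiable ℝ fun w => F w ω
  growth : ∀ w₀, ∃ C, ∀ᶠ w in 𝓝 w₀, ∀ ω,
    ‖F w ω‖ ≤ C * (1 + ‖ω‖) ∧ ‖fderiv ℝ (fun w => F w ω) w‖ ≤ C * (1 + ‖ω‖)

namespace TemperedFamily

variable {F : W → Ω → ℝ} {G : W → Ω → V}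

lemma const (v : V) : TemperedFamily fun (_ : W) (_ : Ω) => v where
  continuous := continuous_const
  differentiable _ := differentiable_const v
  growth _ := ⟨‖v‖, .of_forall fun _ ω => by
    have : 1 ≤ 1 + ‖ω‖ := by linarith [norm_nonneg ω]
    simpa using ⟨le_mul_of_one_le_right (norm_nonneg v) this, by positivity⟩⟩

lemma exists_common_growth (hF : TemperedFamily F) (hG : TemperedFamily G) (w₀ : W) :
    ∃ C, 0 ≤ C ∧ ∀ᶠ w in 𝓝 w₀, ∀ ω,
      (‖F w ω‖ ≤ C * (1 + ‖ω‖) ∧ ‖fderiv ℝ (fun w => F w ω) w‖ ≤ C * (1 + ‖ω‖)) ∧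
      (‖G w ω‖ ≤ C * (1 + ‖ω‖) ∧ ‖fderiv ℝ (fun w => G w ω) w‖ ≤ C * (1 + ‖ω‖)) := by
  obtain ⟨C₁, h₁⟩ := hF.growth w₀
  obtain ⟨C₂, h₂⟩ := hG.growth w₀
  have hle : ∀ {a c c' : ℝ} {ω : Ω}, c ≤ c' → a ≤ c * (1 + ‖ω‖) → a ≤ c' * (1 + ‖ω‖) :=
    fun hc ha => ha.trans (by gcongr)
  refine ⟨max 0 (max C₁ C₂), le_max_left _ _, ?_⟩
  filter_upwards [h₁, h₂] with w hw₁ hw₂ ω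
  have hC₁ : C₁ ≤ max 0 (max C₁ C₂) := (le_max_left _ _).trans (le_max_right _ _)
  have hC₂ : C₂ ≤ max 0 (max C₁ C₂) := (le_max_right _ _).trans (le_max_right _ _)
  exact ⟨⟨hle hC₁ (hw₁ ω).1, hle hC₁ (hw₁ ω).2⟩, hle hC₂ (hw₂ ω).1, hle hC₂ (hw₂ ω).2⟩

variable [MeasurableSpace Ω] [OpensMeasurableSpace Ω] {μ : Measure Ω} [FiniteDimensional ℝ V]

lemma aestronglyMeasurable (hG : TemperedFamily G) (w : W) : AEStronglyMeasurable (G w) μ := by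
  borelize V
  exact (hG.continuous.comp (Continuous.prodMk_right w)).measurable.aestronglyMeasurable

lemma integrable (hG : TemperedFamily G) (hμ : HasExpMoments μ) (w : W) :
    Integrable (G w) μ := by
  obtain ⟨C, hC⟩ := hG.growth w
  exact hμ.integrable_of_linear_growth (hG.aestronglyMeasurable w) fun ω => (hC.self_of_nhds ω).1

lemma integrable_exp (hF : TemperedFamily F) (hμ : HasExpMoments μ) (m : ℝ) (w : W) :
    Integrable (fun ω => exp (m * F w ω)) μ := by
  obtain ⟨C, hC⟩ := hF.growth w
  exact hμ.integrable_exp (hF.aestronglyMeasurable w) (fun ω => (hC.self_of_nhds ω).1) m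

lemma hasExpMoments_tilted (hF : TemperedFamily F) (hμ : HasExpMoments μ) (m : ℝ) (w : W) :
    HasExpMoments (μ.tilted fun ω => m * F w ω) := by
  obtain ⟨C, hC⟩ := hF.growth w
  exact hμ.tilted (hF.aestronglyMeasurable w) (fun ω => (hC.self_of_nhds ω).1) m

variable [FiniteDimensional ℝ W]

lemma aestronglyMeasurable_fderiv (hG : TemperedFamily G) (w : W) :
    AEStronglyMeasurable (fun ω => fderiv ℝ (fun w => G w ω) w) μ := by
  have : ProperSpace W := FiniteDimensional.proper ℝ W
  borelize W
  borelize (W →L[ℝ] V)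
  have hcont : Continuous (Function.uncurry fun ω w => G w ω) :=
    hG.continuous.comp continuous_swap
  exact ((measurable_fderiv_with_param ℝ hcont).comp
    (measurable_id.prodMk measurable_const)).aestronglyMeasurable

lemma integrable_fderiv (hG : TemperedFamily G) (hμ : HasExpMoments μ) (w : W) :
    Integrable (fun ω => fderiv ℝ (fun w => G w ω) w) μ := by
  obtain ⟨C, hC⟩ := hG.growth w
  exact hμ.integrable_of_linear_growth (hG.aestronglyMeasurable_fderiv w)
    fun ω => (hC.self_of_nhds ω).2

lemma hasFDerivAt_integral_exp_smul (hF : TemperedFamily F) (hG : TemperedFamily G)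
    (hμ : HasExpMoments μ) (m : ℝ) (w : W) :
    HasFDerivAt (fun w => ∫ ω, exp (m * F w ω) • G w ω ∂μ)
      (∫ ω, exp (m * F w ω) • (fderiv ℝ (fun w => G w ω) w +
        m • (fderiv ℝ (fun w => F w ω) w).smulRight (G w ω)) ∂μ) w := by
  obtain ⟨C, hC0, hC⟩ := hF.exists_common_growth hG w
  have hF_exp w := (hF.integrable_exp hμ m w).aestronglyMeasurable
  refine hasFDerivAt_integral_of_dominated_of_fderiv_le hC
    (.of_forall fun w => (hF_exp w).smul (hG.aestronglyMeasurable w))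
    (hμ.integrable_exp_smul (D := C) (k := 1) (hF.aestronglyMeasurable w)
      (hG.aestronglyMeasurable w) (fun ω => (hC.self_of_nhds ω).1.1) (fun ω => ?_) m)
    ((hF_exp w).smul ((hG.aestronglyMeasurable_fderiv w).add
      (((ContinuousLinearMap.smulRightL ℝ W V).aestronglyMeasurable_comp₂
        (hF.aestronglyMeasurable_fderiv w) (hG.aestronglyMeasurable w)).const_smul m)))
    (F := fun w ω => exp (m * F w ω) • G w ω)
    (F' := fun w ω => exp (m * F w ω) • (fderiv ℝ (fun w => G w ω) w +
      m • (fderiv ℝ (fun w => F w ω) w).smulRight (G w ω)))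
    (bound := fun ω => exp (|m| * C) * (C + |m| * C ^ 2) * exp ((|m| * C + 2) * ‖ω‖))
    (.of_forall fun ω w hw => norm_exp_smul_le (V := W →L[ℝ] V) m (hw ω).1.1 ?_)
    ((hμ _).const_mul _)
    (.of_forall fun ω w _ =>
      hasFDerivAt_exp_smul (hF.differentiable ω w) (hG.differentiable ω w) m)
  · exact (hC.self_of_nhds ω).2.1.trans
      (mul_le_mul_of_nonneg_left (one_add_le_exp_one_mul _) hC0)
  · exact norm_add_smul_smulRight_le (norm_nonneg ω) m (hw ω).2.2 (hw ω).1.2 (hw ω).2.1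

lemma hasFDerivAt_integral_exp (hF : TemperedFamily F) (hμ : HasExpMoments μ) (m : ℝ) (w : W) :
    HasFDerivAt (fun w => ∫ ω, exp (m * F w ω) ∂μ)
      (m • ∫ ω, exp (m * F w ω) • fderiv ℝ (fun w => F w ω) w ∂μ) w := by
  have h := hF.hasFDerivAt_integral_exp_smul (const (1 : ℝ)) hμ m w
  have hone : ∀ A : W →L[ℝ] ℝ, A.smulRight (1 : ℝ) = A := fun A => by ext; simp
  simpa only [fderiv_fun_const, Pi.zero_apply, zero_add, smul_eq_mul, mul_one, hone,
    smul_comm _ m, integral_smul] using h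

variable [IsProbabilityMeasure μ]

theorem hasFDerivAt_logLaplace (hF : TemperedFamily F) (hμ : HasExpMoments μ) (m : ℝ) (w : W) :
    HasFDerivAt (fun w => logLaplace m μ (F w))
      (∫ ω, fderiv ℝ (fun w => F w ω) w ∂μ.tilted fun ω => m * F w ω) w := by
  by_cases hm : m = 0
  · simpa [logLaplace, hm] using! hF.hasFDerivAt_integral_exp_smul hF hμ 0 w
  · simp only [logLaplace, if_neg hm, cgf, mgf]
    have hZ := integral_exp_pos (hF.integrable_exp hμ m w)
    convert! ((hF.hasFDerivAt_integral_exp hμ m w).log hZ.ne').const_mul m⁻¹ using 1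
    rw [integral_tilted_eq_inv_smul, smul_comm _ m, inv_smul_smul₀ hm]

theorem hasFDerivAt_integral_tilted (hF : TemperedFamily F) (hG : TemperedFamily G)
    (hμ : HasExpMoments μ) (m : ℝ) (w : W) :
    HasFDerivAt (fun w => ∫ ω, G w ω ∂μ.tilted fun ω => m * F w ω)
      (∫ ω, (fderiv ℝ (fun w => G w ω) w + m • (fderiv ℝ (fun w => F w ω) w).smulRight (G w ω))
          ∂(μ.tilted fun ω => m * F w ω) -
        m • (∫ ω, fderiv ℝ (fun w => F w ω) w ∂μ.tilted fun ω => m * F w ω).smulRight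
          (∫ ω, G w ω ∂μ.tilted fun ω => m * F w ω)) w := by
  have hZ := integral_exp_pos (hF.integrable_exp hμ m w)
  simp only [integral_tilted_eq_inv_smul]
  convert! ((hasDerivAt_inv hZ.ne').comp_hasFDerivAt w (hF.hasFDerivAt_integral_exp hμ m w)).smul
    (hF.hasFDerivAt_integral_exp_smul hG hμ m w) using 1
  ext y
  simp only [smul_add, smul_smul, sub_eq_add_neg, add_apply, smul_apply, neg_apply,
    ContinuousLinearMap.smulRight_apply, smul_eq_mul, Function.comp_apply, neg_mul, neg_smul,
    add_right_inj, neg_inj]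
  congr 1
  ring

end TemperedFamily

end Tempered

/-! ## Gaussian integration by parts -/

section Gaussian

variable {E : Type*} [NormedAddCommGroup E] [NormedSpace ℝ E]

lemma HasExpMoments.of_isGaussian [CompleteSpace E] [SecondCountableTopology E]
    [MeasurableSpace E] [BorelSpace E] (μ : Measure E) [IsGaussian μ] :
    HasExpMoments μ := fun k => by
  obtain ⟨C, hC, hint⟩ := IsGaussian.exists_integrable_exp_sq μ
  refine (hint.const_mul (exp (k ^ 2 / (4 * C)))).mono' (by fun_prop) (.of_forall fun ω => ?_)
  rw [Real.norm_eq_abs, Real.abs_exp, ← Real.exp_add]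
  refine Real.exp_le_exp.2 ?_
  have hsq : k ^ 2 / (4 * C) + C * ‖ω‖ ^ 2 - k * ‖ω‖ = C * (‖ω‖ - k / (2 * C)) ^ 2 := by
    field_simp; ring
  linarith [mul_nonneg hC.le (sq_nonneg (‖ω‖ - k / (2 * C)))]

lemma norm_rotation_fst_le (θ : ℝ) (p : E × E) :
    ‖cos θ • p.1 + sin θ • p.2‖ ≤ 2 * ‖p‖ := by
  have h₁ : ‖cos θ • p.1‖ ≤ 1 * ‖p‖ := by
    rw [norm_smul]
    exact mul_le_mul (Real.abs_cos_le_one θ) (norm_fst_le p) (norm_nonneg _) zero_le_one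
  have h₂ : ‖sin θ • p.2‖ ≤ 1 * ‖p‖ := by
    rw [norm_smul]
    exact mul_le_mul (Real.abs_sin_le_one θ) (norm_snd_le p) (norm_nonneg _) zero_le_one
  linarith [norm_add_le (cos θ • p.1) (sin θ • p.2)]

lemma norm_rotation_snd_le (θ : ℝ) (p : E × E) :
    ‖cos θ • p.2 - sin θ • p.1‖ ≤ 2 * ‖p‖ := by
  simpa [Prod.norm_def, max_comm, sub_eq_add_neg] using norm_rotation_fst_le (-θ) p.swap

lemma hasDerivAt_rotation (p : E × E) {G : E → E →L[ℝ] ℝ} (hG : Differentiable ℝ G) (θ : ℝ) :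
    HasDerivAt (fun θ => G (cos θ • p.1 + sin θ • p.2) (cos θ • p.2 - sin θ • p.1))
      (fderiv ℝ G (cos θ • p.1 + sin θ • p.2) (cos θ • p.2 - sin θ • p.1)
          (cos θ • p.2 - sin θ • p.1) -
        G (cos θ • p.1 + sin θ • p.2) (cos θ • p.1 + sin θ • p.2)) θ := by
  have hX : HasDerivAt (fun θ => cos θ • p.1 + sin θ • p.2) (cos θ • p.2 - sin θ • p.1) θ := by
    convert! ((Real.hasDerivAt_cos θ).smul_const p.1).add
      ((Real.hasDerivAt_sin θ).smul_const p.2) using 1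
    rw [neg_smul]; abel
  have hY : HasDerivAt (fun θ => cos θ • p.2 - sin θ • p.1)
      (-(cos θ • p.1 + sin θ • p.2)) θ := by
    convert! ((Real.hasDerivAt_cos θ).smul_const p.2).sub
      ((Real.hasDerivAt_sin θ).smul_const p.1) using 1
    rw [neg_smul]; abel
  convert! ((hG _).hasFDerivAt.comp_hasDerivAt θ hX).clm_apply hY using 1
  simp only [map_neg, sub_eq_add_neg, Function.comp_apply]

lemma norm_clm_apply_le_exp {F : Type*} [NormedAddCommGroup F] [NormedSpace ℝ F] {A : E →L[ℝ] F}
    {y : E} {C k r : ℝ} (hA : ‖A‖ ≤ C * exp (k * r)) (hy : ‖y‖ ≤ r) :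
    ‖A y‖ ≤ C * exp ((k + 1) * r) :=
  calc ‖A y‖ ≤ ‖A‖ * ‖y‖ := A.le_opNorm y
    _ ≤ C * exp (k * r) * exp (1 * r) := by
        refine mul_le_mul hA (hy.trans ?_) (norm_nonneg y) ((norm_nonneg A).trans hA)
        linarith [one_add_le_exp_one_mul r]
    _ = C * exp ((k + 1) * r) := by rw [mul_assoc, ← Real.exp_add, add_mul]

lemma norm_le_exp_of_norm_le {X Y : Type*} [NormedAddCommGroup X] [NormedAddCommGroup Y]
    {f : X → Y} {C k : ℝ} (hk : 0 ≤ k) (hC : ∀ x, ‖f x‖ ≤ C * exp (k * ‖x‖)) {x : X} {r : ℝ}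
    (hx : ‖x‖ ≤ r) :
    ‖f x‖ ≤ C * exp (k * r) := by
  have : 0 ≤ C := by simpa using (norm_nonneg _).trans (hC 0)
  exact (hC x).trans (by gcongr)

variable [FiniteDimensional ℝ E] [MeasurableSpace E] [BorelSpace E] {μ : Measure E}
  {G : E → E →L[ℝ] ℝ} {C k : ℝ}

lemma stronglyMeasurable_fderiv_apply_apply (G : E → E →L[ℝ] ℝ) :
    StronglyMeasurable fun p : E × E => fderiv ℝ G p.1 p.2 p.2 := by
  have : ProperSpace E := FiniteDimensional.proper ℝ E
  borelize (E →L[ℝ] E →L[ℝ] ℝ)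
  have h : StronglyMeasurable fun p : E × E => fderiv ℝ G p.1 :=
    (measurable_fderiv ℝ G).stronglyMeasurable.comp_measurable measurable_fst
  have hsnd : StronglyMeasurable fun p : E × E => p.2 := continuous_snd.stronglyMeasurable
  have happ : StronglyMeasurable fun p : E × E => fderiv ℝ G p.1 p.2 :=
    isBoundedBilinearMap_apply.continuous.comp_stronglyMeasurable (h.prodMk hsnd)
  exact isBoundedBilinearMap_apply.continuous.comp_stronglyMeasurable (happ.prodMk hsnd)

lemma integral_rotation_apply [IsGaussian μ] (hμ : μ[id] = 0) (hG : Continuous G) (θ : ℝ) :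
    ∫ p : E × E, G (cos θ • p.1 + sin θ • p.2) (cos θ • p.2 - sin θ • p.1) ∂μ.prod μ =
      ∫ p : E × E, G p.1 p.2 ∂μ.prod μ := by
  have : ProperSpace E := FiniteDimensional.proper ℝ E
  have hG_cont : Continuous fun p : E × E => G p.1 p.2 := by fun_prop
  conv_rhs => rw [← IsGaussian.map_rotation_eq_self hμ θ]
  rw [integral_map (by fun_prop) hG_cont.aestronglyMeasurable]
  simp only [ContinuousLinearMap.rotation_apply, sub_eq_neg_add, neg_smul]

lemma hasDerivAt_integral_rotation (hμ : HasExpMoments (μ.prod μ)) (hG : Differentiable ℝ G)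
    (hk : 0 ≤ k) (hC : ∀ x, ‖G x‖ ≤ C * exp (k * ‖x‖))
    (hC' : ∀ x, ‖fderiv ℝ G x‖ ≤ C * exp (k * ‖x‖)) :
    HasDerivAt (fun θ => ∫ p : E × E,
        G (cos θ • p.1 + sin θ • p.2) (cos θ • p.2 - sin θ • p.1) ∂μ.prod μ)
      (∫ p : E × E, (fderiv ℝ G p.1 p.2 p.2 - G p.1 p.1) ∂μ.prod μ) 0 := by
  have : ProperSpace E := FiniteDimensional.proper ℝ E
  have hcont := hG.continuous
  have h := (hasDerivAt_integral_of_dominated_loc_of_deriv_le (μ := μ.prod μ)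
    (F := fun θ p => G (cos θ • p.1 + sin θ • p.2) (cos θ • p.2 - sin θ • p.1))
    (F' := fun θ p => fderiv ℝ G (cos θ • p.1 + sin θ • p.2) (cos θ • p.2 - sin θ • p.1)
          (cos θ • p.2 - sin θ • p.1) -
        G (cos θ • p.1 + sin θ • p.2) (cos θ • p.1 + sin θ • p.2)) (x₀ := 0) (s := Set.univ)
    (bound := fun p => C * exp ((k + 1 + 1) * (2 * ‖p‖)) + C * exp ((k + 1) * (2 * ‖p‖)))
    univ_mem (.of_forall fun θ => Continuous.aestronglyMeasurable (by fun_prop))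
    (hμ.integrable_of_norm_le (Continuous.aestronglyMeasurable (by fun_prop)) C (k + 1) fun p => by
      simpa using norm_clm_apply_le_exp
        (norm_le_exp_of_norm_le hk hC (norm_fst_le p)) (norm_snd_le p))
    (by
      simpa using! ((stronglyMeasurable_fderiv_apply_apply G).sub (g := fun p => G p.1 p.1)
        (Continuous.stronglyMeasurable (by fun_prop))).aestronglyMeasurable)
    (.of_forall fun p θ _ => (norm_sub_le _ _).trans <| add_le_add
      (norm_clm_apply_le_exp (norm_clm_apply_le_exp (norm_le_exp_of_norm_le hk hC'
        (norm_rotation_fst_le θ p)) (norm_rotation_snd_le θ p)) (norm_rotation_snd_le θ p))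
      (norm_clm_apply_le_exp (norm_le_exp_of_norm_le hk hC
        (norm_rotation_fst_le θ p)) (norm_rotation_fst_le θ p)))
    (by simpa only [← mul_assoc] using! ((hμ _).const_mul C).add ((hμ _).const_mul C))
    (.of_forall fun p θ _ => hasDerivAt_rotation p hG θ)).2
  simpa using h

/- The two sides differ by the derivative of the integral of `integral_rotation_apply`, which does
not depend on `θ`. -/
theorem integral_apply_self_eq_integral_fderiv [IsGaussian μ] (hμ : μ[id] = 0)
    (hG : Differentiable ℝ G) (hk : 0 ≤ k) (hC : ∀ x, ‖G x‖ ≤ C * exp (k * ‖x‖))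
    (hC' : ∀ x, ‖fderiv ℝ G x‖ ≤ C * exp (k * ‖x‖)) :
    ∫ x, G x x ∂μ = ∫ x, ∫ y, fderiv ℝ G x y y ∂μ ∂μ := by
  have : ProperSpace E := FiniteDimensional.proper ℝ E
  have hexp : HasExpMoments (μ.prod μ) := .of_isGaussian _
  have hzero := (hasDerivAt_integral_rotation hexp hG hk hC hC').unique <|
    (hasDerivAt_const 0 _).congr_of_eventuallyEq <|
      .of_forall fun θ => integral_rotation_apply hμ hG.continuous θ
  have hG_cont : Continuous fun p : E × E => G p.1 p.1 := by
    have := hG.continuous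
    fun_prop
  have hint_self : Integrable (fun p : E × E => G p.1 p.1) (μ.prod μ) :=
    hexp.integrable_of_norm_le hG_cont.aestronglyMeasurable C (k + 1) fun p =>
      norm_clm_apply_le_exp (norm_le_exp_of_norm_le hk hC (norm_fst_le p)) (norm_fst_le p)
  have hint : Integrable (fun p : E × E => fderiv ℝ G p.1 p.2 p.2) (μ.prod μ) :=
    hexp.integrable_of_norm_le (stronglyMeasurable_fderiv_apply_apply G).aestronglyMeasurable
      C (k + 1 + 1) fun p => norm_clm_apply_le_exp (norm_clm_apply_le_exp
        (norm_le_exp_of_norm_le hk hC' (norm_fst_le p)) (norm_snd_le p)) (norm_snd_le p)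
  rw [integral_sub hint hint_self, sub_eq_zero] at hzero
  rw [← integral_prod _ hint, hzero]
  simpa using (integral_fun_fst (μ := μ) (ν := μ) fun x => G x x).symm

end Gaussian

section Shift

variable {W Ω V : Type*} [NormedAddCommGroup W] [NormedSpace ℝ W] [NormedAddCommGroup Ω]
  [NormedSpace ℝ Ω] [NormedAddCommGroup V] [NormedSpace ℝ V] {f : W → V} {ψ : W → Ω →L[ℝ] W}

lemma hasFDerivAt_comp_add_clm_apply (hf : Differentiable ℝ f) (hψ : Differentiable ℝ ψ) (w : W)
    (ω : Ω) :
    HasFDerivAt (fun w => f (w + ψ w ω))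
      (fderiv ℝ f (w + ψ w ω) ∘L (.id ℝ W + (fderiv ℝ ψ w).flip ω)) w := by
  refine (hf _).hasFDerivAt.comp w ((hasFDerivAt_id w).add ?_)
  simpa using! (hψ w).hasFDerivAt.clm_apply (hasFDerivAt_const ω w)

lemma norm_comp_add_clm_apply_le (hf : Differentiable ℝ f) {C : ℝ} {w : W}
    (hC : ∀ ω, ‖fderiv ℝ f (w + ψ w ω)‖ ≤ C) (ω : Ω) :
    ‖f (w + ψ w ω)‖ ≤ ‖f w‖ + C * (‖ψ w‖ * ‖ω‖) := by
  have hC0 : 0 ≤ C := (norm_nonneg _).trans (hC 0)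
  have hmvt := (convex_segment w (w + ψ w ω)).norm_image_sub_le_of_norm_fderiv_le (𝕜 := ℝ)
    (f := f) (C := C) (fun _ _ => hf _) (fun z hz => ?_) (left_mem_segment ..)
    (right_mem_segment ..)
  · calc ‖f (w + ψ w ω)‖ = ‖f w + (f (w + ψ w ω) - f w)‖ := by rw [add_sub_cancel]
      _ ≤ ‖f w‖ + C * ‖w + ψ w ω - w‖ := (norm_add_le _ _).trans (by gcongr)
      _ ≤ ‖f w‖ + C * (‖ψ w‖ * ‖ω‖) := by
        rw [add_sub_cancel_left]
        gcongr
        exact (ψ w).le_opNorm ω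
  · rw [segment_eq_image'] at hz
    obtain ⟨θ, -, rfl⟩ := hz
    simpa using hC (θ • ω)

lemma exists_eventually_norm_le {X Y : Type*} [TopologicalSpace X] [NormedAddCommGroup Y]
    {φ : X → Y} (hφ : Continuous φ) (x₀ : X) : ∃ R, 0 ≤ R ∧ ∀ᶠ x in 𝓝 x₀, ‖φ x‖ ≤ R :=
  ⟨‖φ x₀‖ + 1, by positivity,
    (hφ.norm.continuousAt.eventually_lt_const (lt_add_one _)).mono fun _ => le_of_lt⟩

lemma TemperedFamily.comp_add_clm (hf : Differentiable ℝ f) (hψ : ContDiff ℝ 1 ψ)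
    (hC : ∀ w₀, ∃ C, ∀ᶠ w in 𝓝 w₀, ∀ ω, ‖fderiv ℝ f (w + ψ w ω)‖ ≤ C) :
    TemperedFamily fun w ω => f (w + ψ w ω) where
  continuous := by
    have := hf.continuous
    have := hψ.continuous
    fun_prop
  differentiable ω w :=
    (hasFDerivAt_comp_add_clm_apply hf (hψ.differentiable one_ne_zero) w ω).differentiableAt
  growth w₀ := by
    obtain ⟨C, hC⟩ := hC w₀
    have hC0 : 0 ≤ C := (norm_nonneg _).trans (hC.self_of_nhds 0)
    obtain ⟨R₀, hR₀, h₀⟩ := exists_eventually_norm_le hf.continuous w₀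
    obtain ⟨R₁, hR₁, h₁⟩ := exists_eventually_norm_le hψ.continuous w₀
    obtain ⟨R₂, hR₂, h₂⟩ := exists_eventually_norm_le (hψ.continuous_fderiv one_ne_zero) w₀
    refine ⟨R₀ + C * (1 + R₁ + R₂), ?_⟩
    filter_upwards [hC, h₀, h₁, h₂] with w hw h₀ h₁ h₂ ω
    constructor
    · calc ‖f (w + ψ w ω)‖ ≤ ‖f w‖ + C * (‖ψ w‖ * ‖ω‖) := norm_comp_add_clm_apply_le hf hw ω
        _ ≤ R₀ * (1 + ‖ω‖) + C * ((1 + R₁ + R₂) * (1 + ‖ω‖)) := by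
          gcongr
          · nlinarith [norm_nonneg ω]
          · linarith
          · linarith
        _ = _ := by ring
    · rw [(hasFDerivAt_comp_add_clm_apply hf (hψ.differentiable one_ne_zero) w ω).fderiv]
      calc _ ≤ C * (1 + ‖fderiv ℝ ψ w‖ * ‖ω‖) := by
            refine (ContinuousLinearMap.opNorm_comp_le _ _).trans ?_
            gcongr
            · exact hw ω
            · refine (norm_add_le _ _).trans (add_le_add ContinuousLinearMap.norm_id_le ?_)
              exact ((fderiv ℝ ψ w).flip.le_opNorm ω).trans_eq
                (by rw [ContinuousLinearMap.opNorm_flip])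
        _ ≤ R₀ * (1 + ‖ω‖) + C * ((1 + R₁ + R₂) * (1 + ‖ω‖)) := by
          refine (mul_le_mul_of_nonneg_left ?_ hC0).trans (le_add_of_nonneg_left ?_)
          · nlinarith [norm_nonneg ω]
          · positivity
        _ = _ := by ring

end Shift

lemma norm_integral_le_of_forall_norm_le {Ω V : Type*} [MeasurableSpace Ω] [NormedAddCommGroup V]
    [NormedSpace ℝ V] {ν : Measure Ω} [IsProbabilityMeasure ν] {f : Ω → V} {C : ℝ}
    (hC : ∀ ω, ‖f ω‖ ≤ C) : ‖∫ ω, f ω ∂ν‖ ≤ C := by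
  simpa using norm_integral_le_of_norm_le_const (μ := ν) (.of_forall hC)

section ParisiForm

variable {E : Type*} [NormedAddCommGroup E] [NormedSpace ℝ E] {g : E → ℝ} {x : E} {m C : ℝ}

/-- The bilinear form `D²g + m Dg ⊗ Dg` at `x`. Paired with the covariance of the Gaussian fields,
it is the right-hand side of the Parisi equation. -/
def parisiForm (m : ℝ) (g : E → ℝ) (x : E) : E →L[ℝ] E →L[ℝ] ℝ :=
  fderiv ℝ (fderiv ℝ g) x + m • (fderiv ℝ g x).smulRight (fderiv ℝ g x)

lemma parisiForm_apply (m : ℝ) (g : E → ℝ) (x y z : E) :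
    parisiForm m g x y z = fderiv ℝ (fderiv ℝ g) x y z + m * (fderiv ℝ g x y * fderiv ℝ g x z) :=
  rfl

lemma norm_smul_smulRight_le {V : Type*} [NormedAddCommGroup V] [NormedSpace ℝ V] {L : E →L[ℝ] ℝ}
    {v : V} (hL : ‖L‖ ≤ 1) (hv : ‖v‖ ≤ 1) (m : ℝ) : ‖m • L.smulRight v‖ ≤ |m| := by
  rw [norm_smul, ContinuousLinearMap.norm_smulRight_apply, Real.norm_eq_abs]
  exact mul_le_of_le_one_right (abs_nonneg m) (mul_le_one₀ hL (norm_nonneg v) hv)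

lemma norm_parisiForm_le (hg : ‖fderiv ℝ g x‖ ≤ 1) (hC : ‖fderiv ℝ (fderiv ℝ g) x‖ ≤ C) :
    ‖parisiForm m g x‖ ≤ C + |m| :=
  norm_add_le_of_le hC (norm_smul_smulRight_le hg hg m)

lemma norm_fderiv_fderiv_le_of_norm_parisiForm_le (hg : ‖fderiv ℝ g x‖ ≤ 1)
    (hC : ‖parisiForm m g x‖ ≤ C) : ‖fderiv ℝ (fderiv ℝ g) x‖ ≤ C + |m| := by
  have h := norm_sub_le_of_le hC (norm_smul_smulRight_le hg hg m)
  rwa [parisiForm, add_sub_cancel_right] at h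

end ParisiForm

section FreeEnergy

variable {S : Type*} [Fintype S] {g : (S → ℝ) → ℝ} {C m : ℝ}

/-- The properties of the log-partition function `x ↦ log ∑ σ, exp (x σ)` which are preserved by the
averages `logLaplace`. -/
structure IsFreeEnergy (C : ℝ) (g : (S → ℝ) → ℝ) : Prop where
  monotone : Monotone g
  map_add_const : ∀ x k, g (x + Function.const S k) = g x + k
  differentiable : Differentiable ℝ g
  differentiable_fderiv : Differentiable ℝ (fderiv ℝ g)
  norm_fderiv_fderiv_le : ∀ x, ‖fderiv ℝ (fderiv ℝ g) x‖ ≤ C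

namespace IsFreeEnergy

lemma lipschitzWith (hg : IsFreeEnergy C g) : LipschitzWith 1 g := by
  refine LipschitzWith.of_le_add fun x y => ?_
  rw [dist_eq_norm, ← hg.map_add_const]
  exact hg.monotone fun σ => by
    simpa using sub_le_iff_le_add'.1 ((le_abs_self _).trans (norm_le_pi_norm (x - y) σ))

lemma norm_fderiv_le_one (hg : IsFreeEnergy C g) (x : S → ℝ) : ‖fderiv ℝ g x‖ ≤ 1 := by
  simpa using norm_fderiv_le_of_lipschitz ℝ hg.lipschitzWith

lemma norm_parisiForm_le (hg : IsFreeEnergy C g) (x : S → ℝ) : ‖parisiForm m g x‖ ≤ C + |m| :=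
  _root_.norm_parisiForm_le (hg.norm_fderiv_le_one x) (hg.norm_fderiv_fderiv_le x)

lemma fderiv_apply_const (hg : IsFreeEnergy C g) (x : S → ℝ) (k : ℝ) :
    fderiv ℝ g x (Function.const S k) = k := by
  have hline : HasDerivAt (fun t : ℝ => g (x + t • Function.const S k))
      (fderiv ℝ g x (Function.const S k)) 0 := by
    exact (hg.differentiable x).hasFDerivAt.hasLineDerivAt (Function.const S k)
  have haff : HasDerivAt (fun t : ℝ => g x + t * k) k 0 := by
    simpa using ((hasDerivAt_id (0 : ℝ)).mul_const k).const_add (g x)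
  refine hline.unique (haff.congr_of_eventuallyEq (.of_forall fun t => ?_))
  simpa using! hg.map_add_const x (t * k)

lemma parisiForm_apply_const (hg : IsFreeEnergy C g) (x y : S → ℝ) (k : ℝ) :
    parisiForm m g x y (Function.const S k) = m * fderiv ℝ g x y * k := by
  have hD : (fderiv ℝ (fderiv ℝ g) x y) (Function.const S k) = 0 := by
    have h := ((hg.differentiable_fderiv x).hasFDerivAt.clm_apply
      (hasFDerivAt_const (Function.const S k) x)).fderiv
    simp only [hg.fderiv_apply_const, fderiv_fun_const] at h
    simpa using (DFunLike.congr_fun h y).symm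
  simp [parisiForm, hD, hg.fderiv_apply_const, mul_assoc]

variable {μ : Measure (S → ℝ)}

lemma aestronglyMeasurable_parisiForm (hg : IsFreeEnergy C g) (m c : ℝ) (x : S → ℝ) :
    AEStronglyMeasurable (fun ω => parisiForm m g (x + c • ω)) μ := by
  borelize ((S → ℝ) →L[ℝ] (S → ℝ) →L[ℝ] ℝ)
  have hD2 : StronglyMeasurable (fderiv ℝ (fderiv ℝ g)) :=
    (measurable_fderiv ℝ (fderiv ℝ g)).stronglyMeasurable
  have hD := hg.differentiable_fderiv.continuous.stronglyMeasurable
  have hprod := (ContinuousLinearMap.smulRightL ℝ (S → ℝ) ((S → ℝ) →L[ℝ] ℝ)).continuous₂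
    |>.comp_stronglyMeasurable (hD.prodMk hD)
  exact ((hD2.add (hprod.const_smul m)).comp_measurable (by fun_prop)).aestronglyMeasurable

lemma integrable_parisiForm [IsFiniteMeasure μ] (hg : IsFreeEnergy C g) (m c : ℝ) (x : S → ℝ) :
    Integrable (fun ω => parisiForm m g (x + c • ω)) μ :=
  .of_bound (hg.aestronglyMeasurable_parisiForm m c x) _
    (.of_forall fun _ => hg.norm_parisiForm_le _)

lemma temperedFamily (hg : IsFreeEnergy C g) (c : ℝ) :
    TemperedFamily fun x ω : S → ℝ => g (x + c • ω) :=
  .comp_add_clm (ψ := fun _ => c • .id ℝ (S → ℝ)) hg.differentiable contDiff_const fun _ =>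
    ⟨1, .of_forall fun _ _ => hg.norm_fderiv_le_one _⟩

lemma temperedFamily_fderiv (hg : IsFreeEnergy C g) (c : ℝ) :
    TemperedFamily fun x ω : S → ℝ => fderiv ℝ g (x + c • ω) :=
  .comp_add_clm (ψ := fun _ => c • .id ℝ (S → ℝ)) hg.differentiable_fderiv contDiff_const fun _ =>
    ⟨C, .of_forall fun _ _ => hg.norm_fderiv_fderiv_le _⟩

variable [IsProbabilityMeasure μ]

lemma hasFDerivAt_logLaplace (hg : IsFreeEnergy C g) (hμ : HasExpMoments μ) (m c : ℝ)
    (x : S → ℝ) :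
    HasFDerivAt (fun x => logLaplace m μ fun ω => g (x + c • ω))
      (∫ ω, fderiv ℝ g (x + c • ω) ∂μ.tilted fun ω => m * g (x + c • ω)) x := by
  simpa only [fderiv_comp_add_right] using (hg.temperedFamily c).hasFDerivAt_logLaplace hμ m x

lemma hasFDerivAt_fderiv_logLaplace (hg : IsFreeEnergy C g) (hμ : HasExpMoments μ) (m c : ℝ)
    (x : S → ℝ) :
    HasFDerivAt (fderiv ℝ fun x => logLaplace m μ fun ω => g (x + c • ω))
      (∫ ω, parisiForm m g (x + c • ω) ∂(μ.tilted fun ω => m * g (x + c • ω)) -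
        m • (fderiv ℝ (fun x => logLaplace m μ fun ω => g (x + c • ω)) x).smulRight
          (fderiv ℝ (fun x => logLaplace m μ fun ω => g (x + c • ω)) x)) x := by
  have hfderiv := funext fun x => (hg.hasFDerivAt_logLaplace hμ m c x).fderiv
  have h := (hg.temperedFamily c).hasFDerivAt_integral_tilted (hg.temperedFamily_fderiv c) hμ m x
  simpa only [hfderiv, fderiv_comp_add_right] using! h

theorem parisiForm_logLaplace (hg : IsFreeEnergy C g) (hμ : HasExpMoments μ) (m c : ℝ)
    (x : S → ℝ) :
    parisiForm m (fun x => logLaplace m μ fun ω => g (x + c • ω)) x =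
      ∫ ω, parisiForm m g (x + c • ω) ∂μ.tilted fun ω => m * g (x + c • ω) := by
  rw [parisiForm, (hg.hasFDerivAt_fderiv_logLaplace hμ m c x).fderiv, sub_add_cancel]

protected lemma logLaplace (hg : IsFreeEnergy C g) (hμ : HasExpMoments μ) (m c : ℝ) :
    IsFreeEnergy (C + 2 * |m|) fun x => logLaplace m μ fun ω => g (x + c • ω) where
  monotone x y hxy := by
    have h := hg.temperedFamily c
    exact logLaplace_mono (h.integrable hμ x) (h.integrable hμ y) (h.integrable_exp hμ m x)
      (h.integrable_exp hμ m y) fun ω => hg.monotone (add_le_add_left hxy _)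
  map_add_const x k := by
    have h := hg.temperedFamily c
    have hshift ω : g (x + Function.const S k + c • ω) = k + g (x + c • ω) := by
      rw [add_right_comm, hg.map_add_const, add_comm]
    simp only [hshift]
    rw [logLaplace_const_add (h.integrable hμ x) (h.integrable_exp hμ m x), add_comm]
  differentiable x := (hg.hasFDerivAt_logLaplace hμ m c x).differentiableAt
  differentiable_fderiv x := (hg.hasFDerivAt_fderiv_logLaplace hμ m c x).differentiableAt
  norm_fderiv_fderiv_le x := by
    have hexp := (hg.temperedFamily c).integrable_exp hμ m x
    have : IsProbabilityMeasure (μ.tilted fun ω => m * g (x + c • ω)) :=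
      isProbabilityMeasure_tilted hexp
    have hone : ‖fderiv ℝ (fun x => logLaplace m μ fun ω => g (x + c • ω)) x‖ ≤ 1 := by
      rw [(hg.hasFDerivAt_logLaplace hμ m c x).fderiv]
      exact norm_integral_le_of_forall_norm_le fun ω => hg.norm_fderiv_le_one (x + c • ω)
    rw [two_mul, ← add_assoc]
    refine norm_fderiv_fderiv_le_of_norm_parisiForm_le hone ?_
    rw [hg.parisiForm_logLaplace hμ]
    exact norm_integral_le_of_forall_norm_le fun ω => hg.norm_parisiForm_le (x + c • ω)

end IsFreeEnergy

end FreeEnergy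

section Contract

variable {S : Type*} [Fintype S] [DecidableEq S]

/-- The pairing `∑ σ τ, A σ τ * B e_σ e_τ` of a matrix `A` with a bilinear form `B` on `S → ℝ`. -/
def contract (A : S → S → ℝ) : ((S → ℝ) →L[ℝ] (S → ℝ) →L[ℝ] ℝ) →L[ℝ] ℝ :=
  ∑ σ, ∑ τ, A σ τ • (ContinuousLinearMap.apply ℝ ℝ (Pi.single τ 1 : S → ℝ)).comp
    (ContinuousLinearMap.apply ℝ ((S → ℝ) →L[ℝ] ℝ) (Pi.single σ 1 : S → ℝ))

variable (A A' : S → S → ℝ) (B : (S → ℝ) →L[ℝ] (S → ℝ) →L[ℝ] ℝ)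

lemma contract_apply :
    contract A B = ∑ σ, ∑ τ, A σ τ * B (Pi.single σ 1) (Pi.single τ 1) := by
  simp [contract]

lemma contract_add : contract (A + A') B = contract A B + contract A' B := by
  simp [contract_apply, add_mul, Finset.sum_add_distrib]

lemma contract_smul (c : ℝ) : contract (c • A) B = c * contract A B := by
  simp [contract_apply, mul_assoc, Finset.mul_sum]

lemma clm_apply_apply_eq_sum (x y : S → ℝ) :
    B x y = ∑ σ, ∑ τ, x σ * y τ * B (Pi.single σ 1) (Pi.single τ 1) := by
  conv_lhs => rw [pi_eq_sum_univ' x, pi_eq_sum_univ' y]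
  simp only [map_sum, map_smul, sum_apply, smul_apply, smul_eq_mul, Finset.mul_sum, mul_assoc]
  rw [Finset.sum_comm]
  simp only [mul_left_comm]

lemma contract_const (k : ℝ) :
    contract (fun _ _ => k) B = k * B (Function.const S 1) (Function.const S 1) := by
  simp only [contract_apply, clm_apply_apply_eq_sum B (Function.const S 1), Finset.mul_sum,
    Function.const_apply, one_mul]

/-- The matrix of second moments of the coordinates under `μ`. -/
def secondMoment (μ : Measure (S → ℝ)) (σ τ : S) : ℝ := ∫ y, y σ * y τ ∂μ

lemma integral_apply_apply_self {μ : Measure (S → ℝ)} (hμ : HasExpMoments μ) :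
    ∫ y, B y y ∂μ = contract (secondMoment μ) B := by
  have hint (σ τ : S) : Integrable (fun y : S → ℝ => y σ * y τ) μ := by
    refine hμ.integrable_of_norm_le (by fun_prop) 1 2 fun y => ?_
    have h (σ : S) : |y σ| ≤ exp (1 * ‖y‖) :=
      (norm_le_pi_norm y σ).trans (by linarith [one_add_le_exp_one_mul ‖y‖])
    calc ‖y σ * y τ‖ = |y σ| * |y τ| := by rw [norm_mul, Real.norm_eq_abs, Real.norm_eq_abs]
      _ ≤ exp (1 * ‖y‖) * exp (1 * ‖y‖) := by gcongr <;> exact h _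
      _ = 1 * exp (2 * ‖y‖) := by rw [← Real.exp_add]; ring_nf
  rw [contract_apply, funext fun y => clm_apply_apply_eq_sum B y y]
  rw [integral_finsetSum _ fun σ _ => integrable_finsetSum _ fun τ _ => (hint σ τ).mul_const _]
  simp only [integral_finsetSum _ fun τ _ => (hint _ τ).mul_const _, integral_mul_const,
    secondMoment]

end Contract

lemma fderiv_comp_const_add_smul {E V : Type*} [NormedAddCommGroup E] [NormedSpace ℝ E]
    [NormedAddCommGroup V] [NormedSpace ℝ V] (f : E → V) (x : E) (c : ℝ) (ω : E) :
    fderiv ℝ (fun ω => f (x + c • ω)) ω = c • fderiv ℝ f (x + c • ω) := by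
  rw [fderiv_comp_smul (f := fun y => f (x + y)), fderiv_comp_add_left]

namespace IsFreeEnergy

variable {S : Type*} [Fintype S] {g : (S → ℝ) → ℝ} {C m : ℝ} {A : S → S → ℝ}

lemma hasFDerivAt_exp_smul_fderiv (hg : IsFreeEnergy C g) (m c : ℝ) (x ω : S → ℝ) :
    HasFDerivAt (fun ω => exp (m * g (x + c • ω)) • fderiv ℝ g (x + c • ω))
      (exp (m * g (x + c • ω)) • c • parisiForm m g (x + c • ω)) ω := by
  have haff : DifferentiableAt ℝ (fun ω => x + c • ω) ω := by fun_prop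
  have h := hasFDerivAt_exp_smul ((hg.differentiable _).comp ω haff)
    ((hg.differentiable_fderiv _).comp ω haff) m
  simp only [Function.comp_def, fderiv_comp_const_add_smul] at h
  convert! h using 2
  ext y z
  simp only [smul_apply, add_apply, parisiForm_apply, ContinuousLinearMap.smulRight_apply,
    smul_eq_mul]
  ring

variable [DecidableEq S]

lemma contract_const_parisiForm (hg : IsFreeEnergy C g) (k : ℝ) (x : S → ℝ) :
    contract (fun _ _ => k) (parisiForm m g x) = k * m := by
  rw [contract_const, hg.parisiForm_apply_const, hg.fderiv_apply_const, mul_one, mul_one]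

lemma fderiv_single_nonneg (hg : IsFreeEnergy C g) (x : S → ℝ) (σ : S) :
    0 ≤ fderiv ℝ g x (Pi.single σ 1) := by
  have hline : HasDerivAt (fun t : ℝ => g (x + t • Pi.single σ (1 : ℝ)))
      (fderiv ℝ g x (Pi.single σ 1)) 0 :=
    (hg.differentiable x).hasFDerivAt.hasLineDerivAt _
  have hmono : Monotone fun t : ℝ => g (x + t • Pi.single σ (1 : ℝ)) := fun s t hst =>
    hg.monotone (by gcongr; simp)
  exact hline.nonneg_of_monotone hmono

lemma contract_parisiForm_mono (hg : IsFreeEnergy C g) (hA : 0 ≤ A) (x : S → ℝ) :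
    Monotone fun m => contract A (parisiForm m g x) := fun m m' hm => by
  simp only [contract_apply, parisiForm_apply]
  refine Finset.sum_le_sum fun σ _ => Finset.sum_le_sum fun τ _ =>
    mul_le_mul_of_nonneg_left ?_ (hA σ τ)
  gcongr
  exact mul_nonneg (hg.fderiv_single_nonneg x σ) (hg.fderiv_single_nonneg x τ)

variable {μ : Measure (S → ℝ)} [IsGaussian μ]

/-- Gaussian integration by parts turns the derivative of `logLaplace` in the standard deviation of
the field into second derivatives in space: the Parisi equation. -/
theorem integral_fderiv_apply_self_tilted (hg : IsFreeEnergy C g) (hμ : μ[id] = 0) (m c : ℝ)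
    (x : S → ℝ) :
    ∫ ω, fderiv ℝ g (x + c • ω) ω ∂(μ.tilted fun ω => m * g (x + c • ω)) =
      c * contract (secondMoment μ)
        (parisiForm m (fun x => logLaplace m μ fun ω => g (x + c • ω)) x) := by
  have hexp : HasExpMoments μ := .of_isGaussian μ
  have hf := hg.temperedFamily (S := S) c
  obtain ⟨R, hR⟩ := hf.growth x
  have hG := hg.hasFDerivAt_exp_smul_fderiv m c x
  have hR0 : 0 ≤ R := by simpa using (norm_nonneg _).trans (hR.self_of_nhds 0).1
  have hbound ω : ‖c • parisiForm m g (x + c • ω)‖ ≤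
      max 1 (|c| * (C + |m|)) * exp (0 * ‖ω‖) := by
    rw [zero_mul, Real.exp_zero, mul_one, norm_smul]
    exact (mul_le_mul_of_nonneg_left (hg.norm_parisiForm_le _) (abs_nonneg c)).trans
      (le_max_right _ _)
  have hint := hexp.integrable_exp_smul (g := fun ω => c • parisiForm m g (x + c • ω))
    (hf.aestronglyMeasurable x) ((hg.aestronglyMeasurable_parisiForm m c x).const_smul c)
    (fun ω => (hR.self_of_nhds ω).1) hbound m
  have hibp := integral_apply_self_eq_integral_fderiv hμ (fun ω => (hG ω).differentiableAt)
    (by positivity) (fun ω => norm_exp_smul_le m (hR.self_of_nhds ω).1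
      (by simpa using Or.inl (hg.norm_fderiv_le_one _))) fun ω => (hG ω).fderiv ▸
        norm_exp_smul_le m (hR.self_of_nhds ω).1 (hbound ω)
  simp only [(hG _).fderiv, integral_apply_apply_self _ hexp] at hibp
  rw [(contract _).integral_comp_comm hint] at hibp
  rw [hg.parisiForm_logLaplace hexp, integral_tilted_eq_inv_smul, integral_tilted_eq_inv_smul]
  simp only [smul_comm _ c, integral_smul, map_smul, smul_apply] at hibp ⊢
  rw [hibp, smul_comm, smul_eq_mul c]

end IsFreeEnergy

section Flow

variable {S : Type*} [Fintype S] {u : ℝ → (S → ℝ) → ℝ} {c : ℝ → ℝ} {t : ℝ} {x : S → ℝ}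

/-- A differentiable one-parameter family of free energies whose time derivative is bounded in
space, locally uniformly in time. -/
structure IsFreeEnergyFlow (u : ℝ → (S → ℝ) → ℝ) : Prop where
  exists_isFreeEnergy : ∃ C, ∀ t, IsFreeEnergy C (u t)
  differentiable : Differentiable ℝ (Function.uncurry u)
  deriv_bound : ∀ t₀, ∃ C, ∀ᶠ t in 𝓝 t₀, ∀ x, |deriv (fun t => u t x) t| ≤ C

/-- One step of the interpolation: average out a field with law `μ` and amplitude `c t`. -/
def parisiFlow (m : ℝ) (μ : Measure (S → ℝ)) (c : ℝ → ℝ) (u : ℝ → (S → ℝ) → ℝ) (t : ℝ)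
    (x : S → ℝ) : ℝ :=
  logLaplace m μ fun ω => u t (x + c t • ω)

lemma fderiv_uncurry_apply {E : Type*} [NormedAddCommGroup E] [NormedSpace ℝ E] {u : ℝ → E → ℝ}
    {t : ℝ} {x : E} (hu : DifferentiableAt ℝ (Function.uncurry u) (t, x)) (a : ℝ) (y : E) :
    fderiv ℝ (Function.uncurry u) (t, x) (a, y) =
      a * deriv (fun t => u t x) t + fderiv ℝ (u t) x y := by
  have ht := (hu.hasFDerivAt.comp t (hasFDerivAt_prodMk_left t x)).hasDerivAt.deriv
  have hx := (hu.hasFDerivAt.comp x (hasFDerivAt_prodMk_right t x)).fderiv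
  simp only [Function.comp_def, Function.uncurry_apply_pair] at ht hx
  have hay : ((a, y) : ℝ × E) = a • (1, 0) + (0, y) := by simp
  rw [hay, map_add, map_smul, ht, hx]
  simp

namespace IsFreeEnergyFlow

lemma norm_fderiv_uncurry_le (hu : IsFreeEnergyFlow u) {C : ℝ}
    (hC : |deriv (fun t => u t x) t| ≤ C) :
    ‖fderiv ℝ (Function.uncurry u) (t, x)‖ ≤ C + 1 := by
  obtain ⟨D, hD⟩ := hu.exists_isFreeEnergy
  have hC0 : 0 ≤ C := (abs_nonneg _).trans hC
  refine ContinuousLinearMap.opNorm_le_bound _ (by positivity) fun ⟨a, y⟩ => ?_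
  rw [fderiv_uncurry_apply hu.differentiable.differentiableAt]
  calc ‖a * deriv (fun t => u t x) t + fderiv ℝ (u t) x y‖
      ≤ ‖a‖ * C + 1 * ‖y‖ := by
        refine norm_add_le_of_le ?_ ?_
        · rw [norm_mul]; gcongr; exact hC
        · exact (fderiv ℝ (u t) x).le_of_opNorm_le ((hD t).norm_fderiv_le_one x) y
    _ ≤ ‖(a, y)‖ * C + 1 * ‖(a, y)‖ := by
        gcongr
        · exact norm_fst_le (a, y)
        · exact norm_snd_le (a, y)
    _ = (C + 1) * ‖(a, y)‖ := by ring

lemma temperedFamily (hu : IsFreeEnergyFlow u) (hc : ContDiff ℝ 1 c) :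
    TemperedFamily fun (w : ℝ × (S → ℝ)) ω => u w.1 (w.2 + c w.1 • ω) := by
  have hψ : ContDiff ℝ 1 fun w : ℝ × (S → ℝ) => c w.1 • ContinuousLinearMap.inr ℝ ℝ (S → ℝ) := by
    fun_prop
  have hadd (w : ℝ × (S → ℝ)) (ω : S → ℝ) :
      w + (c w.1 • ContinuousLinearMap.inr ℝ ℝ (S → ℝ)) ω = (w.1, w.2 + c w.1 • ω) := by
    simp [Prod.ext_iff]
  have h := TemperedFamily.comp_add_clm hu.differentiable hψ fun w => by
    obtain ⟨C, hC⟩ := hu.deriv_bound w.1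
    refine ⟨C + 1, (continuous_fst.tendsto w).eventually hC |>.mono fun v hv ω => ?_⟩
    rw [hadd]
    exact hu.norm_fderiv_uncurry_le (hv _)
  simpa only [hadd] using! h

lemma fderiv_comp_add_smul_apply (hu : IsFreeEnergyFlow u) (hc : Differentiable ℝ c) (t : ℝ)
    (x ω : S → ℝ) :
    fderiv ℝ (fun w : ℝ × (S → ℝ) => u w.1 (w.2 + c w.1 • ω)) (t, x) (1, 0) =
      deriv (fun s => u s (x + c t • ω)) t + deriv c t * fderiv ℝ (u t) (x + c t • ω) ω := by
  have hshift : HasFDerivAt (fun w : ℝ × (S → ℝ) => (w.1, w.2 + c w.1 • ω)) _ (t, x) :=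
    hasFDerivAt_fst.prodMk <| hasFDerivAt_snd.add <|
      ((hc t).hasFDerivAt.comp (t, x) hasFDerivAt_fst).smul_const ω
  have h := ((hu.differentiable _).hasFDerivAt.comp (t, x) hshift).fderiv
  simp only [Function.comp_def, Function.uncurry_apply_pair] at h
  rw [h, ContinuousLinearMap.comp_apply]
  simp [fderiv_uncurry_apply (hu.differentiable _)]

variable {μ : Measure (S → ℝ)} [IsProbabilityMeasure μ]

lemma hasFDerivAt_uncurry_parisiFlow (hu : IsFreeEnergyFlow u) (hμ : HasExpMoments μ)
    (hc : ContDiff ℝ 1 c) (m : ℝ) (w : ℝ × (S → ℝ)) :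
    HasFDerivAt (Function.uncurry (parisiFlow m μ c u))
      (∫ ω, fderiv ℝ (fun w : ℝ × (S → ℝ) => u w.1 (w.2 + c w.1 • ω)) w
        ∂μ.tilted fun ω => m * u w.1 (w.2 + c w.1 • ω)) w :=
  (hu.temperedFamily hc).hasFDerivAt_logLaplace hμ m w

lemma integrable_deriv (hu : IsFreeEnergyFlow u) (t a : ℝ) (x : S → ℝ) :
    Integrable (fun ω => deriv (fun s => u s (x + a • ω)) t) μ := by
  obtain ⟨C, hC⟩ := hu.deriv_bound t
  refine .of_bound ?_ C (.of_forall fun ω => hC.self_of_nhds _)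
  have hderiv (y : S → ℝ) : deriv (fun s => u s y) t =
      fderiv ℝ (Function.uncurry u) (t, y) (1, 0) := by
    simp [fderiv_uncurry_apply (hu.differentiable _)]
  simp only [hderiv]
  exact ((measurable_fderiv_apply_const ℝ (Function.uncurry u) _).comp
    (by fun_prop)).aestronglyMeasurable

theorem deriv_parisiFlow [DecidableEq S] [IsGaussian μ] (hu : IsFreeEnergyFlow u) (hμ : μ[id] = 0)
    (hc : ContDiff ℝ 1 c) (m t : ℝ) (x : S → ℝ) :
    deriv (fun t => parisiFlow m μ c u t x) t =
      ∫ ω, deriv (fun s => u s (x + c t • ω)) t ∂(μ.tilted fun ω => m * u t (x + c t • ω)) +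
        c t * deriv c t * contract (secondMoment μ) (parisiForm m (parisiFlow m μ c u t) x) := by
  have hexp : HasExpMoments μ := .of_isGaussian μ
  obtain ⟨C, hC⟩ := hu.exists_isFreeEnergy
  have hF := hu.temperedFamily hc
  have : IsProbabilityMeasure (μ.tilted fun ω => m * u t (x + c t • ω)) :=
    isProbabilityMeasure_tilted (hF.integrable_exp hexp m (t, x))
  have hint := hF.integrable_fderiv (hF.hasExpMoments_tilted hexp m (t, x)) (t, x)
  have hsum := hint.apply_continuousLinearMap (1, 0)
  have htime := hu.integrable_deriv (μ := μ.tilted fun ω => m * u t (x + c t • ω)) t (c t) x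
  have hderiv := hu.hasFDerivAt_uncurry_parisiFlow hexp hc m (t, x)
  have hflow := fderiv_uncurry_apply hderiv.differentiableAt 1 0
  rw [hderiv.fderiv, ContinuousLinearMap.integral_apply hint,
    one_mul, map_zero, add_zero] at hflow
  simp only [hu.fderiv_comp_add_smul_apply (hc.differentiable one_ne_zero)] at hflow hsum
  have hspace := hsum.sub htime
  simp only [Pi.sub_def, add_sub_cancel_left] at hspace
  rw [← hflow, integral_add htime hspace, integral_const_mul,
    (hC t).integral_fderiv_apply_self_tilted hμ, ← mul_assoc, mul_comm (deriv c t)]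
  rfl

protected lemma parisiFlow [IsGaussian μ] (hu : IsFreeEnergyFlow u) (hμ : μ[id] = 0)
    (hc : ContDiff ℝ 1 c) (m : ℝ) : IsFreeEnergyFlow (parisiFlow m μ c u) where
  exists_isFreeEnergy := by
    obtain ⟨C, hC⟩ := hu.exists_isFreeEnergy
    exact ⟨_, fun t => (hC t).logLaplace (.of_isGaussian μ) m (c t)⟩
  differentiable w :=
    (hu.hasFDerivAt_uncurry_parisiFlow (.of_isGaussian μ) hc m w).differentiableAt
  deriv_bound t₀ := by
    classical
    obtain ⟨C, hC⟩ := hu.exists_isFreeEnergy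
    have hC' t := (hC t).logLaplace (.of_isGaussian μ) m (c t)
    obtain ⟨D, hD⟩ := hu.deriv_bound t₀
    obtain ⟨R, -, hR⟩ := exists_eventually_norm_le (hc.continuous.mul hc.continuous_deriv_one) t₀
    refine ⟨D + R * (‖contract (secondMoment μ)‖ * (C + 2 * |m| + |m|)), ?_⟩
    filter_upwards [hD, hR] with t hD hR x
    have : IsProbabilityMeasure (μ.tilted fun ω => m * u t (x + c t • ω)) :=
      isProbabilityMeasure_tilted <|
        (hu.temperedFamily hc).integrable_exp (.of_isGaussian μ) m (t, x)
    rw [hu.deriv_parisiFlow hμ hc]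
    refine (abs_add_le _ _).trans (add_le_add ?_ ?_)
    · rw [← Real.norm_eq_abs]
      exact norm_integral_le_of_forall_norm_le fun ω => hD (x + c t • ω)
    · rw [abs_mul]
      exact mul_le_mul hR ((contract _).le_opNorm_of_le ((hC' t).norm_parisiForm_le x))
        (abs_nonneg _) ((norm_nonneg _).trans hR)

protected lemma const {C : ℝ} {g : (S → ℝ) → ℝ} (hg : IsFreeEnergy C g) :
    IsFreeEnergyFlow fun _ => g where
  exists_isFreeEnergy := ⟨C, fun _ => hg⟩
  differentiable := hg.differentiable.comp differentiable_snd
  deriv_bound _ := ⟨0, by simp⟩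

end IsFreeEnergyFlow

end Flow

section Guerra

variable {S : Type*} [Fintype S] [DecidableEq S] {u : ℝ → (S → ℝ) → ℝ} {A : S → S → ℝ} {m L : ℝ}

/-- Guerra's differential inequality for the interpolation `u`, in which `A` is the part of the
covariance that remains to be averaged out and `L` is the accumulated remainder. -/
def GuerraInequality (A : S → S → ℝ) (m L : ℝ) (u : ℝ → (S → ℝ) → ℝ) : Prop :=
  ∀ t ∈ Set.Icc 0 (π / 2), ∀ x, deriv (fun t => u t x) t +
    sin t * cos t * contract A (parisiForm m (u t) x) ≤ sin t * cos t * L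

namespace GuerraInequality

lemma sin_mul_cos_nonneg {t : ℝ} (ht : t ∈ Set.Icc 0 (π / 2)) : 0 ≤ sin t * cos t :=
  mul_nonneg (Real.sin_nonneg_of_nonneg_of_le_pi ht.1 (by linarith [ht.1, ht.2]))
    (Real.cos_nonneg_of_mem_Icc ⟨by linarith [ht.1, ht.2], ht.2⟩)

lemma add_const (h : GuerraInequality A m L u) (hu : IsFreeEnergyFlow u) (k : ℝ) :
    GuerraInequality (A + fun _ _ => k) m (L + k * m) u := fun t ht x => by
  obtain ⟨C, hC⟩ := hu.exists_isFreeEnergy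
  rw [contract_add, (hC t).contract_const_parisiForm]
  linarith [h t ht x]

lemma anti {m' : ℝ} (h : GuerraInequality A m L u) (hu : IsFreeEnergyFlow u) (hA : 0 ≤ A)
    (hm : m' ≤ m) : GuerraInequality A m' L u := fun t ht x => by
  obtain ⟨C, hC⟩ := hu.exists_isFreeEnergy
  have := mul_le_mul_of_nonneg_left ((hC t).contract_parisiForm_mono hA x hm)
    (sin_mul_cos_nonneg ht)
  exact (add_le_add_right this _).trans (h t ht x)

protected theorem parisiFlow {μ : Measure (S → ℝ)} [IsGaussian μ] {c : ℝ → ℝ} {ε : ℝ}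
    (h : GuerraInequality A m L u) (hu : IsFreeEnergyFlow u) (hμ : μ[id] = 0) (hc : ContDiff ℝ 1 c)
    (hε : ∀ t, c t * deriv c t = -ε * (sin t * cos t)) :
    GuerraInequality (A + ε • secondMoment μ) m L (parisiFlow m μ c u) := fun t ht x => by
  have hexp : HasExpMoments μ := .of_isGaussian μ
  obtain ⟨C, hC⟩ := hu.exists_isFreeEnergy
  set ν := μ.tilted fun ω => m * u t (x + c t • ω)
  have : IsProbabilityMeasure ν :=
    isProbabilityMeasure_tilted ((hu.temperedFamily hc).integrable_exp hexp m (t, x))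
  have htime := hu.integrable_deriv (μ := ν) t (c t) x
  have hspace := (hC t).integrable_parisiForm (μ := ν) m (c t) x
  have hsum := htime.add (((contract A).integrable_comp hspace).const_mul (sin t * cos t))
  have hform : parisiForm m (_root_.parisiFlow m μ c u t) x =
      ∫ ω, parisiForm m (u t) (x + c t • ω) ∂ν :=
    (hC t).parisiForm_logLaplace hexp m (c t) x
  calc _ = ∫ ω, (deriv (fun s => u s (x + c t • ω)) t + sin t * cos t *
        contract A (parisiForm m (u t) (x + c t • ω))) ∂ν := by
        rw [integral_add htime (((contract A).integrable_comp hspace).const_mul _),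
          integral_const_mul, (contract A).integral_comp_comm hspace, ← hform,
          hu.deriv_parisiFlow hμ hc, hε, contract_add, contract_smul]
        ring
    _ ≤ ∫ _, sin t * cos t * L ∂ν :=
        integral_mono hsum (integrable_const _) fun ω => h t ht (x + c t • ω)
    _ = sin t * cos t * L := by simp

theorem le_add_half (h : GuerraInequality 0 m L u) (hu : IsFreeEnergyFlow u) (x : S → ℝ) :
    u (π / 2) x ≤ u 0 x + L / 2 := by
  have hderiv (t : ℝ) : HasDerivAt (fun t => u t x - L / 2 * sin t ^ 2)
      (deriv (fun t => u t x) t - sin t * cos t * L) t := by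
    have hux : HasDerivAt (fun t => u t x) (deriv (fun t => u t x) t) t :=
      (hu.differentiable.comp (differentiable_id.prodMk (differentiable_const x))
        |>.differentiableAt).hasDerivAt
    refine (hux.sub (((Real.hasDerivAt_sin t).pow 2).const_mul (L / 2))).congr_deriv ?_
    push_cast
    ring
  have hanti : AntitoneOn (fun t => u t x - L / 2 * sin t ^ 2) (Set.Icc 0 (π / 2)) := by
    refine antitoneOn_of_deriv_nonpos (convex_Icc _ _)
      (fun t _ => (hderiv t).continuousAt.continuousWithinAt)
      (fun t _ => (hderiv t).differentiableAt.differentiableWithinAt) fun t ht => ?_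
    rw [(hderiv t).deriv, sub_nonpos]
    simpa [contract_apply] using h t (interior_subset ht) x
  have hpi : (0 : ℝ) ≤ π / 2 := by positivity
  simpa using hanti (Set.left_mem_Icc.2 hpi) (Set.right_mem_Icc.2 hpi) hpi

end GuerraInequality

end Guerra

section LogSumExp

variable {S : Type*} [Fintype S]

/-- The log-partition function. -/
def logSumExp (x : S → ℝ) : ℝ := log (∑ σ, exp (x σ))

/-- The Gibbs weights. -/
def softmax (x : S → ℝ) (σ : S) : ℝ := exp (x σ) / ∑ τ, exp (x τ)

lemma softmax_nonneg (x : S → ℝ) (σ : S) : 0 ≤ softmax x σ := by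
  unfold softmax
  positivity

variable [Nonempty S]

lemma sum_exp_pos (x : S → ℝ) : 0 < ∑ σ, exp (x σ) :=
  Finset.sum_pos (fun _ _ => Real.exp_pos _) Finset.univ_nonempty

lemma sum_softmax (x : S → ℝ) : ∑ σ, softmax x σ = 1 := by
  simp only [softmax, ← Finset.sum_div, div_self (sum_exp_pos x).ne']

lemma softmax_eq_exp (x : S → ℝ) (σ : S) : softmax x σ = exp (x σ - logSumExp x) := by
  rw [Real.exp_sub, logSumExp, Real.exp_log (sum_exp_pos x), softmax]

lemma hasFDerivAt_logSumExp (x : S → ℝ) :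
    HasFDerivAt logSumExp
      (∑ σ, softmax x σ • (ContinuousLinearMap.proj σ : (S → ℝ) →L[ℝ] ℝ)) x := by
  have h := (HasFDerivAt.fun_sum (u := Finset.univ) fun σ _ =>
    (hasFDerivAt_apply (𝕜 := ℝ) (F' := fun _ : S => ℝ) σ x).exp).log (sum_exp_pos x).ne'
  simpa only [Finset.smul_sum, smul_smul, softmax, div_eq_inv_mul] using! h

lemma fderiv_logSumExp : fderiv ℝ (logSumExp (S := S)) = fun x =>
    ∑ σ, softmax x σ • (ContinuousLinearMap.proj σ : (S → ℝ) →L[ℝ] ℝ) :=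
  funext fun x => (hasFDerivAt_logSumExp x).fderiv

lemma hasFDerivAt_softmax (x : S → ℝ) (σ : S) :
    HasFDerivAt (softmax · σ)
      (softmax x σ • (ContinuousLinearMap.proj σ - fderiv ℝ logSumExp x)) x := by
  simp only [softmax_eq_exp]
  exact ((hasFDerivAt_apply σ x).sub
    (hasFDerivAt_logSumExp x).differentiableAt.hasFDerivAt).exp

lemma hasFDerivAt_fderiv_logSumExp (x : S → ℝ) :
    HasFDerivAt (fderiv ℝ (logSumExp (S := S)))
      (∑ σ, (softmax x σ • (ContinuousLinearMap.proj σ - fderiv ℝ logSumExp x)).smulRight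
        (ContinuousLinearMap.proj σ : (S → ℝ) →L[ℝ] ℝ)) x := by
  conv in fderiv ℝ logSumExp => rw [fderiv_logSumExp]
  exact HasFDerivAt.fun_sum fun σ _ => (hasFDerivAt_softmax x σ).smul_const _

lemma parisiForm_one_logSumExp_apply (x y z : S → ℝ) :
    parisiForm 1 logSumExp x y z = ∑ σ, softmax x σ * (y σ * z σ) := by
  rw [parisiForm_apply, (hasFDerivAt_fderiv_logSumExp x).fderiv]
  have hz : fderiv ℝ logSumExp x z = ∑ σ, softmax x σ * z σ := by
    simp [fderiv_logSumExp]
  simp only [sum_apply, ContinuousLinearMap.smulRight_apply,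
    smul_apply, sub_apply, ContinuousLinearMap.proj_apply,
    smul_eq_mul, one_mul]
  rw [hz, Finset.mul_sum, ← Finset.sum_add_distrib]
  exact Finset.sum_congr rfl fun σ _ => by ring

lemma norm_sum_softmax_mul_le {f : S → ℝ} {C : ℝ} (hf : ∀ σ, ‖f σ‖ ≤ C) (x : S → ℝ) :
    ‖∑ σ, softmax x σ * f σ‖ ≤ C :=
  calc ‖∑ σ, softmax x σ * f σ‖ ≤ ∑ σ, softmax x σ * C :=
        norm_sum_le_of_le _ fun σ _ => by
          rw [norm_mul, Real.norm_of_nonneg (softmax_nonneg x σ)]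
          exact mul_le_mul_of_nonneg_left (hf σ) (softmax_nonneg x σ)
    _ = C := by rw [← Finset.sum_mul, sum_softmax, one_mul]

lemma norm_fderiv_logSumExp_le (x : S → ℝ) : ‖fderiv ℝ logSumExp x‖ ≤ 1 :=
  ContinuousLinearMap.opNorm_le_bound _ zero_le_one fun y => by
    simpa [fderiv_logSumExp, sum_apply] using
      norm_sum_softmax_mul_le (norm_le_pi_norm y) x

lemma norm_parisiForm_one_logSumExp_le (x : S → ℝ) : ‖parisiForm 1 logSumExp x‖ ≤ 1 :=
  ContinuousLinearMap.opNorm_le_bound₂ _ zero_le_one fun y z => by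
    rw [parisiForm_one_logSumExp_apply, one_mul]
    exact norm_sum_softmax_mul_le (fun σ => norm_mul_le_of_le (norm_le_pi_norm y σ)
      (norm_le_pi_norm z σ)) x

lemma isFreeEnergy_logSumExp : IsFreeEnergy 2 (logSumExp (S := S)) where
  monotone x y hxy := Real.log_le_log (sum_exp_pos x)
    (Finset.sum_le_sum fun σ _ => Real.exp_le_exp.2 (hxy σ))
  map_add_const x k := by
    simp only [logSumExp, Pi.add_apply, Function.const_apply, Real.exp_add, ← Finset.sum_mul]
    rw [Real.log_mul (sum_exp_pos x).ne' (Real.exp_pos k).ne', Real.log_exp]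
  differentiable x := (hasFDerivAt_logSumExp x).differentiableAt
  differentiable_fderiv x := (hasFDerivAt_fderiv_logSumExp x).differentiableAt
  norm_fderiv_fderiv_le x :=
    (norm_fderiv_fderiv_le_of_norm_parisiForm_le (norm_fderiv_logSumExp_le x)
      (norm_parisiForm_one_logSumExp_le x)).trans_eq (by norm_num)

lemma guerraInequality_logSumExp [DecidableEq S] {A : S → S → ℝ} (hA : ∀ σ, A σ σ = 0) :
    GuerraInequality A 1 0 fun _ => logSumExp := fun t _ x => by
  simp [contract_apply, parisiForm_one_logSumExp_apply, Pi.single_apply, hA]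

end LogSumExp

section Cavity

variable {S : Type*} [Fintype S] {m q : ℕ → ℝ} {μ : ℕ → Measure (S → ℝ)}

/-- The log-partition function averaged successively over the fields with laws `μ 0`, …,
`μ (j - 1)`, whose common amplitude `cos t` decreases from `1` to `0` on `[0, π / 2]`. -/
def cavityFlow (m : ℕ → ℝ) (μ : ℕ → Measure (S → ℝ)) : ℕ → ℝ → (S → ℝ) → ℝ
  | 0 => fun _ => logSumExp
  | j + 1 => parisiFlow (m j) (μ j) cos (cavityFlow m μ j)

lemma cavityFlow_succ_zero_time (m : ℕ → ℝ) (μ : ℕ → Measure (S → ℝ)) (j : ℕ) (x : S → ℝ) :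
    cavityFlow m μ (j + 1) 0 x = logLaplace (m j) (μ j) fun ω => cavityFlow m μ j 0 (x + ω) := by
  simp [cavityFlow, parisiFlow]

lemma cavityFlow_pi_div_two [∀ j, IsProbabilityMeasure (μ j)] (m : ℕ → ℝ) (j : ℕ) (x : S → ℝ) :
    cavityFlow m μ j (π / 2) x = logSumExp x := by
  induction j with
  | zero => rfl
  | succ j ih => simp [cavityFlow, parisiFlow, ih, logLaplace_const]

variable [Nonempty S] [∀ j, IsGaussian (μ j)]

lemma isFreeEnergyFlow_cavityFlow (m : ℕ → ℝ) (hμ : ∀ j, (μ j)[id] = 0) (j : ℕ) :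
    IsFreeEnergyFlow (cavityFlow m μ j) := by
  induction j with
  | zero => exact .const isFreeEnergy_logSumExp
  | succ j ih => exact ih.parisiFlow (hμ j) Real.contDiff_cos (m j)

variable {R : S → S → ℝ} {b k : ℝ}

-- `b (R - q)²` is the covariance which the Hamiltonian and the cavity fields beyond the level `q`
-- leave over; being nonnegative, it lets the Parisi parameter decrease from one level to the next.
theorem guerraInequality_cavityFlow [DecidableEq S] (hμ : ∀ j, (μ j)[id] = 0) (hb : 0 ≤ b)
    (hR : ∀ σ, R σ σ = q 0) (hm : Antitone m) (hm0 : m 0 ≤ 1)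
    (hcov : ∀ j, secondMoment (μ j) = (2 * b * (q j - q (j + 1))) • R) (j : ℕ) :
    GuerraInequality (fun σ τ => b * (R σ τ - q j) ^ 2) (m j)
      (-(b * ∑ i ∈ Finset.range j, m i * (q i ^ 2 - q (i + 1) ^ 2))) (cavityFlow m μ j) := by
  have hflow := isFreeEnergyFlow_cavityFlow m hμ
  have hA (j : ℕ) : 0 ≤ fun σ τ => b * (R σ τ - q j) ^ 2 := fun σ τ =>
    mul_nonneg hb (sq_nonneg _)
  induction j with
  | zero =>
    simpa [cavityFlow] using
      (guerraInequality_logSumExp fun σ => by simp [hR σ]).anti (hflow 0) (hA 0) hm0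
  | succ j ih =>
    have hstep := (ih.parisiFlow (ε := 1) (hflow j) (hμ j) Real.contDiff_cos fun t => by
      rw [Real.deriv_cos]; ring).add_const (hflow (j + 1)) (b * (q (j + 1) ^ 2 - q j ^ 2))
    have hsquare : (fun σ τ => b * (R σ τ - q j) ^ 2) + (1 : ℝ) • secondMoment (μ j) +
        (fun _ _ => b * (q (j + 1) ^ 2 - q j ^ 2)) = fun σ τ => b * (R σ τ - q (j + 1)) ^ 2 := by
      ext σ τ
      simp only [hcov, Pi.add_apply, Pi.smul_apply, smul_eq_mul]
      ring
    rw [hsquare] at hstep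
    rw [cavityFlow, Finset.sum_range_succ]
    convert hstep.anti (hflow (j + 1)) (hA (j + 1)) (hm j.le_succ) using 1
    ring

theorem guerra_bound_gaussian {ρ : Measure (S → ℝ)} [IsGaussian ρ] (hρ : ρ[id] = 0)
    (hμ : ∀ j, (μ j)[id] = 0) (hb : 0 ≤ b)
    (hR : ∀ σ, R σ σ = q 0) (hm : Antitone m) (hm0 : m 0 ≤ 1)
    (hcov : ∀ j, secondMoment (μ j) = (2 * b * (q j - q (j + 1))) • R)
    (hcov' : secondMoment ρ = fun σ τ => b * R σ τ ^ 2 - k) {K : ℕ} (hqK : q K = 0)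
    (hmK : m K = 0) (x : S → ℝ) :
    ∫ ω, logSumExp (x + ω) ∂ρ ≤ cavityFlow m μ K 0 x -
      b / 2 * ∑ i ∈ Finset.range K, m i * (q i ^ 2 - q (i + 1) ^ 2) := by
  classical
  have hflow := isFreeEnergyFlow_cavityFlow m hμ K
  have hcav := guerraInequality_cavityFlow hμ hb hR hm hm0 hcov K
  have hfull := (hcav.parisiFlow (ε := -1) hflow hρ Real.contDiff_sin fun t => by
    rw [Real.deriv_sin]; ring).add_const (hflow.parisiFlow hρ Real.contDiff_sin _) (-k)
  have hzero : (fun σ τ => b * (R σ τ - q K) ^ 2) + (-1 : ℝ) • secondMoment ρ + (fun _ _ => -k) =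
      0 := by
    ext σ τ
    simp [hcov', hqK]
  rw [hzero] at hfull
  have hbound := hfull.le_add_half (hflow.parisiFlow hρ Real.contDiff_sin _) x
  simp only [parisiFlow, hmK, logLaplace, if_true, Real.sin_zero, Real.sin_pi_div_two,
    cavityFlow_pi_div_two, zero_smul, one_smul, add_zero, integral_const, probReal_univ,
    mul_zero] at hbound
  linarith

end Cavity

section PiMeasure

variable {ι : Type*} [Fintype ι] {X : ι → Type*}

lemma covariance_sum_pi [∀ i, MeasurableSpace (X i)] {μ : ∀ i, Measure (X i)}
    [∀ i, IsProbabilityMeasure (μ i)] {f g : ∀ i, X i → ℝ} (hf : ∀ i, MemLp (f i) 2 (μ i))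
    (hg : ∀ i, MemLp (g i) 2 (μ i)) :
    cov[fun ω => ∑ i, f i (ω i), fun ω => ∑ i, g i (ω i); Measure.pi μ] =
      ∑ i, cov[f i, g i; μ i] := by
  have heval i := measurePreserving_eval μ i
  have hdiag i : cov[fun ω => f i (ω i), fun ω => g i (ω i); Measure.pi μ] = 
      cov[f i, g i; μ i] := by
    rw [← (heval i).map_eq]
    refine (covariance_map_fun ?_ ?_ (heval i).aemeasurable).symm <;> rw [(heval i).map_eq]
    exacts [(hf i).aestronglyMeasurable, (hg i).aestronglyMeasurable]
  have hindep {i j} (hij : i ≠ j) : (fun ω => f i (ω i)) ⟂ᵢ[Measure.pi μ] fun ω => g j (ω j) := by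
    have h := iIndepFun_pi (μ := μ) (X := fun i x => (f i x, g i x)) fun i =>
      (hf i).aestronglyMeasurable.aemeasurable.prodMk (hg i).aestronglyMeasurable.aemeasurable
    exact (h.indepFun hij).comp measurable_fst measurable_snd
  have hf' i := (hf i).comp_measurePreserving (heval i)
  have hg' i := (hg i).comp_measurePreserving (heval i)
  refine (covariance_fun_sum_fun_sum hf' hg').trans (Finset.sum_congr rfl fun i _ => ?_)
  exact (Finset.sum_eq_single_of_mem i (Finset.mem_univ i) fun j _ hji =>
    (hindep hji.symm).covariance_eq_zero (hf' i) (hg' j)).trans (hdiag i)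

variable [∀ i, NormedAddCommGroup (X i)] [∀ i, NormedSpace ℝ (X i)] [∀ i, CompleteSpace (X i)]
  [∀ i, SecondCountableTopology (X i)] [∀ i, MeasurableSpace (X i)] [∀ i, BorelSpace (X i)]
  {μ : ∀ i, Measure (X i)} [∀ i, IsGaussian (μ i)]

instance isGaussian_pi : IsGaussian (Measure.pi μ) := by
  have hlaw i : HasGaussianLaw (fun ω : ∀ i, X i => ω i) (Measure.pi μ) :=
    ⟨by rw [(measurePreserving_eval μ i).map_eq]; infer_instance⟩
  have h := iIndepFun.hasGaussianLaw hlaw (iIndepFun_pi fun i => aemeasurable_id)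
  simpa using! h.isGaussian_map

lemma integral_id_pi (hμ : ∀ i, (μ i)[id] = 0) : (Measure.pi μ)[id] = 0 := by
  ext i
  simp only [id_eq] at hμ ⊢
  rw [eval_integral fun i => integrable_eval IsGaussian.integrable_fun_id, integral_eval, hμ,
    Pi.zero_apply]

end PiMeasure

instance : IsGaussian stdGauss := by unfold stdGauss; infer_instance

instance (N : ℕ) : IsGaussian (gaussN N) := by unfold gaussN; infer_instance

instance (N : ℕ) : IsGaussian (gaussC N) := by unfold gaussC; infer_instance

lemma integral_id_stdGauss : stdGauss[id] = 0 := by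
  simp [stdGauss]

lemma integral_id_gaussN (N : ℕ) : (gaussN N)[id] = 0 :=
  integral_id_pi fun _ => integral_id_stdGauss

lemma integral_id_gaussC (N : ℕ) : (gaussC N)[id] = 0 :=
  integral_id_pi fun _ => integral_id_gaussN N

lemma covariance_stdGauss (a b : ℝ) : cov[fun z => z * a, fun z => z * b; stdGauss] = a * b := by
  rw [covariance_mul_const_left, covariance_mul_const_right, covariance_self (by fun_prop),
    stdGauss, variance_fun_id_gaussianReal]
  simp [mul_comm]

lemma covariance_gaussN {N : ℕ} (a b : Fin N → ℝ) :
    cov[fun y => ∑ i, y i * a i, fun y => ∑ i, y i * b i; gaussN N] = ∑ i, a i * b i := by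
  have hmem (c : ℝ) : MemLp (fun z => z * c) 2 stdGauss :=
    (IsGaussian.memLp_id stdGauss 2 (by simp)).mul_const c
  exact (covariance_sum_pi (fun i => hmem (a i)) fun i => hmem (b i)).trans
    (Finset.sum_congr rfl fun i _ => covariance_stdGauss (a i) (b i))

lemma covariance_gaussC {N : ℕ} (a b : Fin N → Fin N → ℝ) :
    cov[fun J => ∑ i, ∑ j, J i j * a i j, fun J => ∑ i, ∑ j, J i j * b i j; gaussC N] =
      ∑ i, ∑ j, a i j * b i j := by
  have hmem (c : Fin N → ℝ) : MemLp (fun y : Fin N → ℝ => ∑ i, y i * c i) 2 (gaussN N) :=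
    memLp_finsetSum _ fun i _ =>
      ((IsGaussian.memLp_id (gaussN N) 2 (by simp)).eval i).mul_const (c i)
  exact (covariance_sum_pi (fun i => hmem (a i)) fun i => hmem (b i)).trans
    (Finset.sum_congr rfl fun i _ => covariance_gaussN (a i) (b i))

lemma secondMoment_map_eq_covariance {E S : Type*} [Countable S] [NormedAddCommGroup E]
    [NormedSpace ℝ E] [CompleteSpace E] [SecondCountableTopology E] [MeasurableSpace E]
    [BorelSpace E] {μ : Measure E} [IsGaussian μ] (hμ : μ[id] = 0) (L : E →L[ℝ] (S → ℝ))
    (σ τ : S) :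
    secondMoment (μ.map L) σ τ = cov[fun ω => L ω σ, fun ω => L ω τ; μ] := by
  have hmem (σ : S) : MemLp (fun ω => L ω σ) 2 μ :=
    IsGaussian.memLp_dual μ ((ContinuousLinearMap.proj (R := ℝ) σ).comp L) 2 (by simp)
  have hmean (σ : S) : ∫ ω, L ω σ ∂μ = 0 := by
    have h := ((ContinuousLinearMap.proj (R := ℝ) σ).comp L).integral_comp_comm
      (IsGaussian.integrable_id (μ := μ))
    rw [hμ, map_zero] at h
    exact h
  rw [secondMoment, integral_map (by fun_prop) (by fun_prop), covariance_eq_sub (hmem σ) (hmem τ),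
    hmean, zero_mul, sub_zero]
  rfl

section SK

variable {N : ℕ}

/-- The random field `σ ↦ ∑ i, y i σᵢ` of the local fields `y`. -/
def siteField (N : ℕ) : (Fin N → ℝ) →L[ℝ] ((Fin N → Bool) → ℝ) :=
  .pi fun σ => ∑ i, spin (σ i) • .proj i

/-- The two-body energy `σ ↦ ∑_{i < j} J i j σᵢ σⱼ` of the couplings `J`. -/
def bondField (N : ℕ) : (Fin N → Fin N → ℝ) →L[ℝ] ((Fin N → Bool) → ℝ) :=
  .pi fun σ => ∑ i, ∑ j, (if i < j then spin (σ i) * spin (σ j) else 0) •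
    (.proj j : (Fin N → ℝ) →L[ℝ] ℝ).comp (.proj i)

lemma siteField_apply (y : Fin N → ℝ) (σ : Fin N → Bool) :
    siteField N y σ = ∑ i, y i * spin (σ i) := by
  simp [siteField, mul_comm]

lemma bondField_apply (J : Fin N → Fin N → ℝ) (σ : Fin N → Bool) :
    bondField N J σ = ∑ i, ∑ j, J i j * if i < j then spin (σ i) * spin (σ j) else 0 := by
  simp only [bondField, ContinuousLinearMap.coe_pi', sum_apply, smul_apply,
    ContinuousLinearMap.comp_apply, ContinuousLinearMap.proj_apply, smul_eq_mul, mul_comm]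

lemma spin_mul_self (s : Bool) : spin s * spin s = 1 := by
  cases s <;> simp [spin]

lemma natCast_mul_overlap (hN : 1 ≤ N) (σ τ : Fin N → Bool) :
    N * overlap N σ τ = ∑ i, spin (σ i) * spin (τ i) :=
  mul_inv_cancel_left₀ (by positivity) _

lemma overlap_self (hN : 1 ≤ N) (σ : Fin N → Bool) : overlap N σ σ = 1 := by
  have : (N : ℝ) ≠ 0 := by positivity
  simp [overlap, spin_mul_self, this]

lemma covariance_siteField (hN : 1 ≤ N) (σ τ : Fin N → Bool) :
    cov[fun y => siteField N y σ, fun y => siteField N y τ; gaussN N] = N * overlap N σ τ := by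
  simp_rw [siteField_apply, covariance_gaussN, natCast_mul_overlap hN]

lemma two_mul_sum_lt (a : Fin N → ℝ) :
    2 * ∑ i, ∑ j, (if i < j then a i * a j else 0) = (∑ i, a i) ^ 2 - ∑ i, a i ^ 2 := by
  have hsymm : ∑ i, ∑ j, (if i < j then a i * a j else 0) =
      ∑ i, ∑ j, (if j < i then a i * a j else 0) := by
    rw [Finset.sum_comm]
    simp_rw [mul_comm]
  have hdiag : ∑ i, a i ^ 2 = ∑ i, ∑ j, (if i = j then a i * a j else 0) := by
    simp [sq]
  rw [two_mul]
  nth_rewrite 2 [hsymm]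
  rw [hdiag, sq, Finset.sum_mul_sum]
  simp_rw [← Finset.sum_add_distrib, ← Finset.sum_sub_distrib]
  refine Finset.sum_congr rfl fun i _ => Finset.sum_congr rfl fun j _ => ?_
  rcases lt_trichotomy i j with h | h | h
  · simp [h, h.ne, h.not_gt]
  · simp [h]
  · simp [h, h.ne', h.not_gt]

lemma covariance_bondField (hN : 1 ≤ N) (σ τ : Fin N → Bool) :
    cov[fun J => bondField N J σ, fun J => bondField N J τ; gaussC N] =
      ((N * overlap N σ τ) ^ 2 - N) / 2 := by
  have hsq : ∑ i, (spin (σ i) * spin (τ i)) ^ 2 = N := by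
    simp [mul_pow, sq (spin _), spin_mul_self]
  have h := two_mul_sum_lt fun i => spin (σ i) * spin (τ i)
  rw [hsq, ← natCast_mul_overlap hN] at h
  simp_rw [bondField_apply, covariance_gaussC]
  rw [eq_div_iff two_ne_zero, mul_comm, ← h]
  congr! 3 with i _ j _
  split_ifs <;> ring

/-- The law of the cavity field with inverse temperature `β` and variance `s`. -/
def cavityLaw (N : ℕ) (β s : ℝ) : Measure ((Fin N → Bool) → ℝ) :=
  (gaussN N).map ((β * √s) • siteField N)

/-- The law of `-β H` for the SK Hamiltonian `H` without external field. -/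
def skLaw (N : ℕ) (β : ℝ) : Measure ((Fin N → Bool) → ℝ) :=
  (gaussC N).map ((β / √N) • bondField N)

instance (N : ℕ) (β s : ℝ) : IsGaussian (cavityLaw N β s) := by
  unfold cavityLaw; infer_instance

instance (N : ℕ) (β : ℝ) : IsGaussian (skLaw N β) := by
  unfold skLaw; infer_instance

lemma integral_id_cavityLaw (N : ℕ) (β s : ℝ) : (cavityLaw N β s)[id] = 0 :=
  (ContinuousLinearMap.integral_id_map IsGaussian.integrable_id _).trans <|
    (congrArg _ (integral_id_gaussN N)).trans (map_zero _)

lemma integral_id_skLaw (N : ℕ) (β : ℝ) : (skLaw N β)[id] = 0 :=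
  (ContinuousLinearMap.integral_id_map IsGaussian.integrable_id _).trans <|
    (congrArg _ (integral_id_gaussC N)).trans (map_zero _)

lemma secondMoment_cavityLaw (hN : 1 ≤ N) (β : ℝ) {s : ℝ} (hs : 0 ≤ s) :
    secondMoment (cavityLaw N β s) = (β ^ 2 * N * s) • overlap N := by
  ext σ τ
  rw [cavityLaw, secondMoment_map_eq_covariance (integral_id_gaussN N)]
  simp only [smul_apply, Pi.smul_apply, smul_eq_mul,
    covariance_const_mul_left, covariance_const_mul_right, covariance_siteField hN]
  linear_combination β ^ 2 * N * overlap N σ τ * Real.mul_self_sqrt hs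

lemma secondMoment_skLaw (hN : 1 ≤ N) (β : ℝ) :
    secondMoment (skLaw N β) = fun σ τ => β ^ 2 * N / 2 * overlap N σ τ ^ 2 - β ^ 2 / 2 := by
  ext σ τ
  have hN0 : (0 : ℝ) < N := by positivity
  rw [skLaw, secondMoment_map_eq_covariance (integral_id_gaussC N)]
  simp only [smul_apply, Pi.smul_apply, smul_eq_mul,
    covariance_const_mul_left, covariance_const_mul_right, covariance_bondField hN]
  field_simp
  rw [Real.sq_sqrt hN0.le]

end SK

section Lipschitz

open scoped NNReal

lemma abs_le_of_lipschitzWith {Ω : Type*} [NormedAddCommGroup Ω] {f : Ω → ℝ} {L : ℝ≥0}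
    (hf : LipschitzWith L f) (ω : Ω) : |f ω| ≤ (|f 0| + L) * (1 + ‖ω‖) := by
  have h : |f ω - f 0| ≤ L * ‖ω‖ := by simpa [Real.dist_eq] using hf.dist_le_mul ω 0
  have h0 := abs_sub_abs_le_abs_sub (f ω) (f 0)
  nlinarith [abs_nonneg (f 0), norm_nonneg ω, L.coe_nonneg]

namespace HasExpMoments

variable {Ω : Type*} [NormedAddCommGroup Ω] [MeasurableSpace Ω] [OpensMeasurableSpace Ω]
  {μ : Measure Ω} {f : Ω → ℝ} {L L' : ℝ≥0}

lemma integrable_of_lipschitzWith (hμ : HasExpMoments μ) (hf : LipschitzWith L f) :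
    Integrable f μ :=
  hμ.integrable_of_linear_growth hf.continuous.aestronglyMeasurable (abs_le_of_lipschitzWith hf)

lemma integrable_exp_of_lipschitzWith (hμ : HasExpMoments μ) (hf : LipschitzWith L f) (m : ℝ) :
    Integrable (fun ω => exp (m * f ω)) μ :=
  hμ.integrable_exp hf.continuous.aestronglyMeasurable (abs_le_of_lipschitzWith hf) m

lemma lipschitzWith_logLaplace {E : Type*} [PseudoMetricSpace E] [IsProbabilityMeasure μ]
    (hμ : HasExpMoments μ) {F : E → Ω → ℝ} (hF : ∀ ω, LipschitzWith L fun x => F x ω)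
    (hF' : ∀ x, LipschitzWith L' (F x)) (m : ℝ) :
    LipschitzWith L fun x => logLaplace m μ (F x) := by
  have hint x := hμ.integrable_of_lipschitzWith (hF' x)
  have hexp x := hμ.integrable_exp_of_lipschitzWith (hF' x) m
  refine .of_le_add_mul L fun x y => ?_
  have hadd : LipschitzWith L' fun ω => L * dist x y + F y ω := by
    simpa using (LipschitzWith.const (L * dist x y)).add (hF' y)
  calc logLaplace m μ (F x) ≤ logLaplace m μ fun ω => L * dist x y + F y ω :=
        logLaplace_mono (hint x) (hμ.integrable_of_lipschitzWith hadd) (hexp x)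
          (hμ.integrable_exp_of_lipschitzWith hadd m) fun ω => by
            linarith [(hF ω).le_add_mul x y]
    _ = logLaplace m μ (F y) + L * dist x y := by
        rw [logLaplace_const_add (hint y) (hexp y), add_comm]

end HasExpMoments

lemma lipschitzWith_log_cosh : LipschitzWith 1 fun u => log (Real.cosh u) := by
  have hderiv u : HasDerivAt (fun u => log (Real.cosh u)) (Real.tanh u) u := by
    rw [Real.tanh_eq_sinh_div_cosh]
    exact (Real.hasDerivAt_cosh u).log (Real.cosh_pos u).ne'
  refine lipschitzWith_of_nnnorm_deriv_le (fun u => (hderiv u).differentiableAt) fun u => ?_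
  rw [(hderiv u).deriv, ← NNReal.coe_le_coe]
  exact (Real.abs_tanh_lt_one u).le

end Lipschitz

section ParisiLevel

variable (K : ℕ) (q m : ℕ → ℝ) (β : ℝ)

lemma parisiLevel_succ (j : ℕ) : parisiLevel K q m β (j + 1) = fun y =>
    logLaplace (m (K - j)) stdGauss fun z =>
      parisiLevel K q m β j (y + z * √(q (K - j) - q (K - j - 1))) :=
  rfl

lemma lipschitzWith_add_mul_sqrt {g : ℝ → ℝ} {L : NNReal} (hg : LipschitzWith L g) (s y : ℝ) :
    LipschitzWith (L * ‖√s‖₊) fun z => g (y + z * √s) := by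
  refine hg.comp (.of_dist_le_mul fun z z' => ?_)
  simp [Real.dist_eq, ← sub_mul, abs_mul, mul_comm]

lemma lipschitzWith_parisiLevel (j : ℕ) : LipschitzWith ‖β‖₊ (parisiLevel K q m β j) := by
  induction j with
  | zero =>
    have h : LipschitzWith ‖β‖₊ fun y : ℝ => β * y := lipschitzWith_smul β
    simpa [parisiLevel] using! lipschitzWith_log_cosh.comp h
  | succ j ih =>
    rw [parisiLevel_succ]
    refine HasExpMoments.lipschitzWith_logLaplace (.of_isGaussian stdGauss) (fun z => ?_)
      (lipschitzWith_add_mul_sqrt ih _) _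
    simpa using! ih.comp (isometry_add_right (z * _)).lipschitz

end ParisiLevel

section Decoupling

variable {N : ℕ}

lemma logSumExp_siteField (y : Fin N → ℝ) :
    logSumExp (siteField N y) = ∑ i, (log 2 + log (Real.cosh (y i))) := by
  have hprod : ∑ σ, exp (siteField N y σ) = ∏ i, (2 * Real.cosh (y i)) := by
    have hbool (a : ℝ) : 2 * Real.cosh a = ∑ s, exp (a * spin s) := by
      simp [Real.cosh_eq, spin]
      ring
    simp_rw [hbool, Fintype.prod_sum, siteField_apply, Real.exp_sum]
  rw [logSumExp, hprod, Real.log_prod fun i _ => by positivity]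
  exact Finset.sum_congr rfl fun i _ => Real.log_mul two_ne_zero (Real.cosh_pos _).ne'

lemma smul_siteField_add (β c : ℝ) (y ω : Fin N → ℝ) :
    β • siteField N y + ((β * c) • siteField N) ω = β • siteField N fun i => y i + ω i * c := by
  have h : (fun i => y i + ω i * c) = y + c • ω := funext fun i => by simp [mul_comm]
  rw [h, map_add, map_smul, smul_add, smul_smul, smul_apply]

/-- Under the site fields the spins are independent, and each one sees the Parisi recursion. -/
lemma cavityFlow_cavityLaw (K : ℕ) (q m : ℕ → ℝ) (β : ℝ) (j : ℕ) (y : Fin N → ℝ) :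
    cavityFlow (fun j => m (K - j)) (fun j => cavityLaw N β (q (K - j) - q (K - j - 1))) j 0
      (β • siteField N y) = ∑ i, (log 2 + parisiLevel K q m β j (y i)) := by
  set s : ℕ → ℝ := fun j => q (K - j) - q (K - j - 1)
  induction j generalizing y with
  | zero =>
    rw [← map_smul]
    exact logSumExp_siteField (β • y)
  | succ j ih =>
    have hmeas : Measurable fun ω : (Fin N → Bool) → ℝ =>
        cavityFlow (fun j => m (K - j)) (fun j => cavityLaw N β (s j)) j 0
          (β • siteField N y + ω) := by
      have := ((isFreeEnergyFlow_cavityFlow (fun j => m (K - j))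
        (fun j => integral_id_cavityLaw N β (s j)) j).differentiable).continuous
      fun_prop
    have hexp : HasExpMoments stdGauss := .of_isGaussian stdGauss
    have hlip i := lipschitzWith_add_mul_sqrt (lipschitzWith_parisiLevel K q m β j) (s j) (y i)
    have hlip' i := (LipschitzWith.const (log 2)).add (hlip i)
    calc _ = logLaplace (m (K - j)) (gaussN N) fun ω =>
          ∑ i, (log 2 + parisiLevel K q m β j (y i + ω i * √(s j))) := by
            rw [cavityFlow_succ_zero_time, cavityLaw, logLaplace_map (by fun_prop) hmeas]
            refine congrArg _ (funext fun ω => ?_)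
            exact (congrArg _ (smul_siteField_add β _ y ω)).trans (ih _)
      _ = ∑ i, logLaplace (m (K - j)) stdGauss fun z =>
          log 2 + parisiLevel K q m β j (y i + z * √(s j)) :=
            logLaplace_pi_sum (fun i => hexp.integrable_of_lipschitzWith (hlip' i))
              fun i => hexp.integrable_exp_of_lipschitzWith (hlip' i) _
      _ = ∑ i, (log 2 + parisiLevel K q m β (j + 1) (y i)) :=
            Finset.sum_congr rfl fun i _ => by
              rw [parisiLevel_succ, logLaplace_const_add (hexp.integrable_of_lipschitzWith (hlip i))
                (hexp.integrable_exp_of_lipschitzWith (hlip i) _)]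

end Decoupling

lemma antitone_comp_sub {α : Type*} [Preorder α] {f : ℕ → α} {K : ℕ}
    (hf : MonotoneOn f (Set.Iic K)) : Antitone fun j => f (K - j) := fun _ _ hij =>
  hf (Nat.sub_le ..) (Nat.sub_le ..) (Nat.sub_le_sub_left hij K)

namespace OrderParam

variable (X : OrderParam)

lemma monotoneOn_q : MonotoneOn X.q (Set.Iic X.K) :=
  monotoneOn_of_le_add_one Set.ordConnected_Iic fun a _ _ ha => X.hq_mono a ha

lemma monotoneOn_m : MonotoneOn X.m (Set.Iic X.K) := by
  refine monotoneOn_of_le_add_one Set.ordConnected_Iic fun a _ _ ha => ?_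
  rcases Nat.eq_zero_or_pos a with rfl | ha0
  · exact X.hm0.trans_le X.hm1
  · exact X.hm_mono a ha0 ha

lemma xFun_eq_m {a : ℕ} (ha : a < X.K) {r : ℝ} (hr : r ∈ Set.Ioo (X.q a) (X.q (a + 1))) :
    xFun X.K X.q X.m r = X.m (a + 1) := by
  have hq1 : X.q (a + 1) ≤ 1 := (X.monotoneOn_q ha Set.self_mem_Iic ha).trans_eq X.hqK
  have hnode : IsLeast {b : ℕ | r < X.q b} (a + 1) := by
    refine ⟨hr.2, fun b hb => ?_⟩
    by_contra! hba
    have : X.q b ≤ X.q a := X.monotoneOn_q (by grind) ha.le (by omega)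
    exact (hb.trans_le this).not_gt hr.1
  rw [xFun, if_neg (hr.2.trans_le hq1).not_ge, hnode.csInf_eq]

lemma integral_mul_xFun : ∫ r in (0 : ℝ)..1, r * xFun X.K X.q X.m r =
    (∑ j ∈ Finset.range X.K,
      X.m (X.K - j) * (X.q (X.K - j) ^ 2 - X.q (X.K - (j + 1)) ^ 2)) / 2 := by
  have hcongr {a} (ha : a < X.K) : Set.EqOn (fun r => r * X.m (a + 1))
      (fun r => r * xFun X.K X.q X.m r) (Set.Ioo (X.q a) (X.q (a + 1))) := fun r hr => by
    simp only [X.xFun_eq_m ha hr]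
  have hsum := intervalIntegral.sum_integral_adjacent_intervals (μ := volume)
    (f := fun r => r * xFun X.K X.q X.m r) (a := X.q) (n := X.K) fun a ha => by
      refine .congr_uIoo (f := fun r => r * X.m (a + 1))
        (Continuous.intervalIntegrable (by fun_prop) _ _) ?_
      rw [Set.uIoo_of_le (X.hq_mono a ha)]
      exact hcongr ha
  rw [X.hq0, X.hqK] at hsum
  rw [← hsum, ← Finset.sum_range_reflect, Finset.sum_div]
  refine Finset.sum_congr rfl fun a ha => ?_
  rw [Finset.mem_range] at ha
  have hpred : X.K - 1 - a < X.K := by omega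
  rw [show X.K - (a + 1) = X.K - 1 - a by omega, show X.K - a = X.K - 1 - a + 1 by omega,
    ← intervalIntegral.integral_congr_Ioo_of_le (X.hq_mono _ hpred) (hcongr hpred),
    intervalIntegral.integral_mul_const, integral_id]
  ring

instance : Nonempty OrderParam :=
  ⟨{ K := 1
     hK := le_rfl
     q := fun n => if n = 0 then 0 else 1
     m := fun n => if n = 0 then 0 else 1
     hq0 := by simp
     hqK := by simp
     hq_mono := by simp
     hm0 := by simp
     hmtop := by simp
     hm1 := by simp
     hm_mono := fun a ha _ => by simp [Nat.one_le_iff_ne_zero.1 ha]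
     hmK := by simp }⟩

end OrderParam

section SKBound

variable {N : ℕ}

lemma log_ZSK (β h : ℝ) (J : Fin N → Fin N → ℝ) :
    log (ZSK N β h J) =
      logSumExp (β • siteField N (fun _ => h) + ((β / √N) • bondField N) J) := by
  refine congrArg log (Finset.sum_congr rfl fun σ _ => congrArg exp ?_)
  simp only [hamSK, Pi.add_apply, Pi.smul_apply, smul_apply, siteField_apply, bondField_apply,
    smul_eq_mul, mul_ite, mul_zero, mul_assoc, ← Finset.mul_sum]
  ring

lemma mul_quenchedFE (hN : 1 ≤ N) (β h : ℝ) :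
    N * quenchedFE N β h = ∫ ω, logSumExp (β • siteField N (fun _ => h) + ω) ∂skLaw N β := by
  have hcont := (isFreeEnergy_logSumExp (S := Fin N → Bool)).differentiable.continuous
  rw [quenchedFE, mul_inv_cancel_left₀ (by positivity), skLaw,
    integral_map (by fun_prop) (Continuous.aestronglyMeasurable (by fun_prop))]
  simp_rw [log_ZSK]

theorem quenchedFE_le_trialAlpha (hN : 1 ≤ N) (β h : ℝ) (X : OrderParam) :
    quenchedFE N β h ≤ trialAlpha X.K X.q X.m β h := by
  let q j := X.q (X.K - j)
  let m j := X.m (X.K - j)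
  have hq_anti : Antitone q := antitone_comp_sub X.monotoneOn_q
  have hcov j : secondMoment (cavityLaw N β (q j - q (j + 1))) =
      (2 * (β ^ 2 * N / 2) * (q j - q (j + 1))) • overlap N := by
    rw [secondMoment_cavityLaw hN β (sub_nonneg.2 (hq_anti j.le_succ)),
      mul_div_cancel₀ _ two_ne_zero]
  have hguerra := guerra_bound_gaussian (integral_id_skLaw N β)
    (fun j => integral_id_cavityLaw N β (q j - q (j + 1))) (by positivity)
    (fun σ => (overlap_self hN σ).trans X.hqK.symm) (antitone_comp_sub X.monotoneOn_m) X.hmK hcov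
    (secondMoment_skLaw hN β) (K := X.K) (by simp [q, X.hq0]) (by simp [X.hm0])
    (β • siteField N fun _ => h)
  have hparisi : cavityFlow m (fun j => cavityLaw N β (q j - q (j + 1))) X.K 0
      (β • siteField N fun _ => h) = N * (log 2 + parisiLevel X.K X.q X.m β X.K h) :=
    (cavityFlow_cavityLaw X.K X.q X.m β X.K fun _ => h).trans (by simp [mul_add])
  rw [← mul_quenchedFE hN, hparisi] at hguerra
  refine le_of_mul_le_mul_left (hguerra.trans_eq ?_) (by positivity : (0 : ℝ) < N)
  rw [trialAlpha, X.integral_mul_xFun]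
  ring

end SKBound

theorem guerra_bound_inf_general (N : ℕ) (hN : 1 ≤ N) (β h : ℝ) :
    quenchedFE N β h ≤ ⨅ X : OrderParam, trialAlpha X.K X.q X.m β h :=
  le_ciInf (quenchedFE_le_trialAlpha hN β h)

/-- for every `N ≥ 1`, `β ≥ 0` and `h ∈ ℝ`, the quenched free energy
of the SK model is bounded by the Parisi solution
`ᾱ(β, h) = inf_x ᾱ(β, h; x)`, the infimum running over all piecewise constant
functional order parameters: `N⁻¹ E log Z_N(β, h, J) ≤ ᾱ(β, h)`. -/
theorem guerra_bound_inf (N : ℕ) (hN : 1 ≤ N) (β h : ℝ) (hβ : 0 ≤ β) :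
    quenchedFE N β h ≤ ⨅ X : OrderParam, trialAlpha X.K X.q X.m β h :=
  guerra_bound_inf_general N hN β h

end
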